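/- Let O_F = ℤ[(1+√5)/2] be the ring of integers of F = ℚ(√5). Then the g-invariant g_{O_F}(2) equals 5; that is: (i) every binary quadratic form over O_F that can be written as a finite sum of squares of linear forms over O_F can be written as a sum of 5 squares of linear forms over O_F, and (ii) there exists a binary quadratic form over O_F (for example 2X² + 2XY + (2·(1+√5)/2 + 16)Y²) that is a finite sum of squares of linear forms over O_F but is not a sum of 4 squares of linear forms over O_F. -/

import Mathlib

/-!
The ring `ℤ[(1+√5)/2]` is identified with the coordinate model `O` of pairs `x + yφ`, and a form
`aX² + 2bXY + cY²` is recorded by its coefficients `a, b, c`. Odd and even refer to the inert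
prime `2`.

*Sums of five squares.* The main point (`sumSq_four`) is that a sum of squares of linear forms with
`a` or `c` odd is a sum of four squares. In general the linear forms are halved as long as all of
them are even; if the form is then still even, removing one odd linear form leaves a form with an
odd diagonal coefficient, which is a sum of four squares (`sumSq_five`).

*Sums of four squares.* After a change of variables `a` is odd and `c` is even, and the case of
discriminant `D = ac - b²` totally positive is the essential one. The binary form is made the top
left corner of a totally positive definite quaternary matrix `M` of determinant `1`
(`four_squares_of_odd_even`). Its construction needs a natural number `P` with `P ≡ -s²` modulo
`2D`, `s` invertible, such that `-D` is a square modulo `P` (`exists_P`). Dirichlet's theorem on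
primes in progressions provides it: modulo an inert prime an element whose norm is a square is a
square, so a product `P ≡ -1` of two suitable inert primes works, except when `N(D) = 5y²`. In that
case `D` times `η = 3 - φ` is a rational number modulo squares, and one splits the condition on
`-D` into one on a rational number and one on `-η`, the latter being a square modulo every prime
`ℓ ≡ 1` modulo `5` (`neg_eta_isSquare`).

*Unimodular lattices.* It remains to see that `M` is a Gram matrix of the standard lattice `O⁴`
(`gram_of_unimodular`), for which its inverse `N` should have a vector of norm `1`; this vector splits
off and leaves a unimodular ternary lattice. The matrix `M` is arranged to have one odd diagonal
entry only and `N₀₀` divisible by `4`, so twice the form `N` on the overlattice generated by half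
of the first basis vector is an even integral lattice of determinant `4`. Minkowski's theorem,
applied to the positive functional `T(x + yφ) = x + y` of the norm, gives a vector of norm `2` in
it. That vector either comes from a vector of norm `1` of `N`, or belongs to an orthogonal frame of
vectors of norm `2`, from which a vector of norm `1` of `N` is found. Unimodular lattices of rank at
most `3` are standard by Minkowski's theorem and an inspection of the complements of vectors of
norm `2` and `η` (`hasONB_3`).

*The example.* If `2X² + 2XY + (16 + 2φ)Y²` were a sum of four squares `(xᵢX + yᵢY)²`, comparing
traces in `∑ xᵢ² = 2` would leave two `xᵢ = ±1` and the others `0`. The remaining equations force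
`v² - v ≡ 1 + φ` modulo `2` for some `v`, which is impossible in the field with four elements
(`not_sumSq_four`).
-/

open MvPolynomial

/-- The ring of integers `ℤ[(1+√5)/2]` of `ℚ(√5)`, as a subalgebra of `ℝ`. -/
noncomputable def Zphi : Subalgebra ℤ ℝ :=
  Algebra.adjoin ℤ {(1 + Real.sqrt 5) / 2}

/-- The golden ratio `(1+√5)/2` as an element of `ℤ[(1+√5)/2]`. -/
noncomputable def goldenRatio' : Zphi :=
  ⟨(1 + Real.sqrt 5) / 2, Algebra.subset_adjoin (Set.mem_singleton _)⟩

/-- The binary quadratic form `2X² + 2XY + (2·(1+√5)/2 + 16)Y²` over `ℤ[(1+√5)/2]`. -/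
noncomputable def exampleForm : MvPolynomial (Fin 2) Zphi :=
  C 2 * X 0 ^ 2 + C 2 * X 0 * X 1 + C (2 * goldenRatio' + 16) * X 1 ^ 2

namespace GoldenForms

/-! ### The ring `ℤ[φ]` -/

section

open QuadraticAlgebra

/-- The ring `ℤ[φ]`, `φ² = φ + 1`, in coordinates: `⟨x, y⟩` stands for `x + y φ`. -/
abbrev O : Type := QuadraticAlgebra ℤ 1 1

/-- The golden ratio as an element of `O`. -/
def phi : O := ⟨0, 1⟩

/-- The totally positive element `3 - φ` of norm `5`. -/
def eta : O := ⟨3, -1⟩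

/-- The embedding `O → ℝ` sending `phi` to `φ`. -/
noncomputable def s1 : O →+* ℝ where
  toFun x := x.re + x.im * Real.goldenRatio
  map_one' := by simp
  map_zero' := by simp
  map_add' x y := by simp; ring
  map_mul' x y := by
    have := Real.goldenRatio_sq
    simp; linear_combination (-(x.im : ℝ) * y.im) * this

/-- The embedding `O → ℝ` sending `phi` to the conjugate of `φ`. -/
noncomputable def s2 : O →+* ℝ where
  toFun x := x.re + x.im * Real.goldenConj
  map_one' := by simp
  map_zero' := by simp
  map_add' x y := by simp; ring
  map_mul' x y := by
    have := Real.goldenConj_sq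
    simp; linear_combination (-(x.im : ℝ) * y.im) * this

/-- The norm form `x² + xy - y²`. -/
abbrev nm : O →* ℤ := QuadraticAlgebra.norm

lemma nm_def (x : O) : nm x = x.re * x.re + x.re * x.im - x.im * x.im := by
  rw [nm, norm_def]; ring

lemma nm_zero : nm 0 = 0 := QuadraticAlgebra.norm_zero

lemma nm_star (x : O) : nm (star x) = nm x := QuadraticAlgebra.norm_star x

lemma s1_apply (x : O) : s1 x = x.re + x.im * Real.goldenRatio := rfl
lemma s2_apply (x : O) : s2 x = x.re + x.im * Real.goldenConj := rfl

lemma s1_mul_s2 (x : O) : s1 x * s2 x = (nm x : ℤ) := by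
  have h1 := Real.goldenRatio_add_goldenConj
  have h2 := Real.goldenRatio_mul_goldenConj
  rw [s1_apply, s2_apply, nm_def]; push_cast
  linear_combination (x.re * x.im : ℝ) * h1 + (x.im * x.im : ℝ) * h2

lemma norm_eq_zero {x : O} (h : nm x = 0) : x = 0 := by
  rw [nm_def] at h
  have h5 : (2 * x.re + x.im) ^ 2 = 5 * x.im ^ 2 := by linear_combination 4 * h
  have him : x.im = 0 := by
    by_contra hne
    have : IsSquare (5 : ℚ) := ⟨(2 * x.re + x.im) / x.im, by
      have : (x.im : ℚ) ≠ 0 := by exact_mod_cast hne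
      field_simp
      exact_mod_cast h5.symm⟩
    have : IsSquare (5 : ℕ) := by
      have := Rat.isSquare_natCast_iff.1 (by exact_mod_cast this : IsSquare ((5 : ℕ) : ℚ))
      exact this
    exact (Nat.prime_iff.1 Nat.prime_five).irreducible.not_isSquare this
  rw [him] at h5
  ext
  · simp at h5 ⊢; exact h5
  · simpa using him

lemma norm_ne_zero {x : O} (h : x ≠ 0) : nm x ≠ 0 := fun h' => h (norm_eq_zero h')

instance : IsDomain O :=
  haveI : NoZeroDivisors O := ⟨by
    intro a b h
    have := congrArg nm h
    rw [map_mul, nm_zero, mul_eq_zero] at this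
    exact this.imp norm_eq_zero norm_eq_zero⟩
  NoZeroDivisors.to_isDomain O

lemma s1_injective : Function.Injective s1 := by
  rw [injective_iff_map_eq_zero]
  intro x h
  apply norm_eq_zero
  have := s1_mul_s2 x
  rw [h, zero_mul] at this
  exact_mod_cast this.symm

lemma s2_injective : Function.Injective s2 := by
  rw [injective_iff_map_eq_zero]
  intro x h
  apply norm_eq_zero
  have := s1_mul_s2 x
  rw [h, mul_zero] at this
  exact_mod_cast this.symm

lemma isUnit_of_norm {x : O} (h : nm x = 1 ∨ nm x = -1) : IsUnit x := by
  rw [isUnit_iff_norm_isUnit, Int.isUnit_iff]; exact h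

lemma norm_of_isUnit {x : O} (h : IsUnit x) : nm x = 1 ∨ nm x = -1 := by
  rwa [isUnit_iff_norm_isUnit, Int.isUnit_iff] at h

/-- Division with remainder for the absolute value of the norm: round both coordinates of the
quotient; the norm form is at most `5/16` in absolute value on the square `|x|, |y| ≤ 1/2`. -/
lemma exists_quot (a b : O) (hb : b ≠ 0) : ∃ q : O, (nm (a - b * q)).natAbs < (nm b).natAbs := by
  have hn := norm_ne_zero hb
  set n := nm b with hndef
  let z := a * star b
  refine ⟨⟨round (z.re / n : ℚ), round (z.im / n : ℚ)⟩, ?_⟩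
  set q : O := ⟨round (z.re / n : ℚ), round (z.im / n : ℚ)⟩ with hq
  set u : ℚ := z.re / n - round (z.re / n : ℚ)
  set v : ℚ := z.im / n - round (z.im / n : ℚ)
  have hu : |u| ≤ 1 / 2 := abs_sub_round _
  have hv : |v| ≤ 1 / 2 := abs_sub_round _
  have hnq : (n : ℚ) ≠ 0 := by exact_mod_cast hn
  have key : nm (z - algebraMap ℤ O n * q) = nm (a - b * q) * n := by
    rw [hndef, ← nm_star b, ← map_mul, nm_star, algebraMap_norm_eq_mul_star]
    congr 1; simp only [z]; ring
  have h1 : (nm (z - algebraMap ℤ O n * q) : ℚ) = n ^ 2 * (u * u + u * v - v * v) := by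
    rw [nm_def]
    have e1 : ((z - algebraMap ℤ O n * q).re : ℚ) = n * u := by
      simp [u, q]; field_simp
    have e2 : ((z - algebraMap ℤ O n * q).im : ℚ) = n * v := by
      simp [v, q]; field_simp
    push_cast
    rw [e1, e2]; ring
  have h2 : |u * u + u * v - v * v| < 1 := by
    rw [abs_le] at hu hv
    rw [abs_lt]; constructor <;> nlinarith
  have h3 : (nm (a - b * q) : ℚ) = n * (u * u + u * v - v * v) := by
    have : (nm (a - b * q) : ℚ) * n = n ^ 2 * (u * u + u * v - v * v) := by
      rw [← h1, key]; push_cast; rfl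
    apply mul_right_cancel₀ hnq; rw [this]; ring
  have h4 : |(nm (a - b * q) : ℚ)| < |(n : ℚ)| := by
    rw [h3, abs_mul]
    exact mul_lt_of_lt_one_right (abs_pos.2 hnq) h2
  zify
  exact_mod_cast h4

instance : IsPrincipalIdealRing O := by
  classical
  choose! q hq using exists_quot
  let _ : EuclideanDomain O :=
    { (inferInstance : CommRing O), (inferInstance : Nontrivial O) with
      quotient := fun a b => if b = 0 then 0 else q a b
      remainder := fun a b => if b = 0 then a else a - b * q a b
      quotient_zero := by simp
      quotient_mul_add_remainder_eq := by
        intro a b; by_cases h : b = 0 <;> simp [h]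
      r := fun a b => (nm a).natAbs < (nm b).natAbs
      r_wellFounded := (measure (fun a : O => (nm a).natAbs)).wf
      remainder_lt := by
        intro a b hb; simpa [hb] using hq a b hb
      mul_left_not_lt := by
        intro a b hb
        rw [map_mul, Int.natAbs_mul, not_lt]
        exact Nat.le_mul_of_pos_right _ (Int.natAbs_pos.2 (norm_ne_zero hb)) }
  exact EuclideanDomain.to_principal_ideal_domain

/-! ### Arithmetic of `O` -/

/-- Total positivity. -/
def TP (x : O) : Prop := 0 < s1 x ∧ 0 < s2 x

lemma TP.norm_pos {x : O} (h : TP x) : 0 < nm x := by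
  have := mul_pos h.1 h.2
  rw [s1_mul_s2] at this; exact_mod_cast this

lemma TP.ne_zero {x : O} (h : TP x) : x ≠ 0 := by
  rintro rfl; simpa using h.1

lemma TP.mul {x y : O} (hx : TP x) (hy : TP y) : TP (x * y) := by
  simp only [TP, map_mul]; exact ⟨mul_pos hx.1 hy.1, mul_pos hx.2 hy.2⟩

lemma TP.of_mul {x y : O} (hx : TP x) (hy : TP (x * y)) : TP y := by
  simp only [TP, map_mul] at hy; exact ⟨(mul_pos_iff_of_pos_left hx.1).1 hy.1, (mul_pos_iff_of_pos_left hx.2).1 hy.2⟩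

lemma TP.add {x y : O} (hx : TP x) (hy : TP y) : TP (x + y) := by
  simp only [TP, map_add]; exact ⟨add_pos hx.1 hy.1, add_pos hx.2 hy.2⟩

lemma TP_sq {x : O} (hx : x ≠ 0) : TP (x * x) := by
  simp only [TP, map_mul]
  exact ⟨mul_self_pos.2 ((map_ne_zero_iff _ s1_injective).2 hx),
    mul_self_pos.2 ((map_ne_zero_iff _ s2_injective).2 hx)⟩

/-- The linear functional `T(x + yφ) = x + y = (φ/√5) s1 + (φ⁻¹/√5) s2`, which is
positive on totally positive elements. -/
def T (x : O) : ℤ := x.re + x.im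

lemma T_eq (x : O) : (T x : ℝ) =
    Real.goldenRatio / √5 * s1 x + (-Real.goldenConj) / √5 * s2 x := by
  have h5 : (0:ℝ) < √5 := by positivity
  have h1 := Real.goldenRatio_sub_goldenConj
  have h2 := Real.goldenRatio_add_goldenConj
  have h3 := Real.goldenRatio_sq
  have h4 := Real.goldenConj_sq
  rw [s1_apply, s2_apply, T]
  field_simp
  push_cast
  linear_combination (-(x.re:ℝ) - x.im) * h1 - x.im * h3 + x.im * h4

lemma T_pos {x : O} (h : TP x) : 0 < T x := by
  have : (0:ℝ) < T x := by
    rw [T_eq]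
    have := Real.goldenRatio_pos
    have := Real.goldenConj_neg
    have h5 : (0:ℝ) < √5 := by positivity
    have := h.1
    have := h.2
    have : 0 < -Real.goldenConj := by linarith
    positivity
  exact_mod_cast this

lemma phi_mul_inv : phi * (phi - 1) = 1 := by ext <;> simp [phi]

lemma isUnit_phi : IsUnit phi := IsUnit.of_mul_eq_one _ phi_mul_inv

/-- Totally positive elements with `T = 1`: `1` and `φ⁻²`. -/
lemma T_eq_one {x : O} (h : TP x) (h1 : T x = 1) : ∃ e : O, IsUnit e ∧ e * e * x = 1 := by
  have hn := h.norm_pos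
  rw [nm_def] at hn
  have hre : x.re = 1 - x.im := by unfold T at h1; linarith
  rw [hre] at hn
  have b1 : -2 < x.im := by nlinarith
  have b2 : x.im < 1 := by nlinarith
  have : x.im = -1 ∨ x.im = 0 := by omega
  rcases this with h | h
  · exact ⟨phi, isUnit_phi, by ext <;> simp [phi, hre, h]⟩
  · exact ⟨1, isUnit_one, by ext <;> simp [hre, h]⟩

/-- Totally positive elements with `T ≤ 2` are `1`, `2` or `3 - φ` up to squares of units. -/
lemma T_lt_three {x : O} (h : TP x) (h1 : T x < 3) :
    ∃ e : O, IsUnit e ∧ (e * e * x = 1 ∨ e * e * x = 2 ∨ e * e * x = eta) := by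
  have h0 := T_pos h
  have : T x = 1 ∨ T x = 2 := by omega
  rcases this with h2 | h2
  · obtain ⟨e, he, h⟩ := T_eq_one h h2
    exact ⟨e, he, Or.inl h⟩
  have hn := h.norm_pos
  rw [nm_def] at hn
  have hre : x.re = 2 - x.im := by unfold T at h2; linarith
  rw [hre] at hn
  have b1 : -4 < x.im := by nlinarith
  have b2 : x.im < 2 := by nlinarith
  have : x.im = -3 ∨ x.im = -2 ∨ x.im = -1 ∨ x.im = 0 ∨ x.im = 1 := by omega
  rcases this with h | h | h | h | h
  · exact ⟨phi * phi, isUnit_phi.mul isUnit_phi, Or.inl (by ext <;> simp [phi, hre, h])⟩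
  · exact ⟨phi, isUnit_phi, Or.inr (Or.inl (by ext <;> simp [phi, hre, h]))⟩
  · exact ⟨1, isUnit_one, Or.inr (Or.inr (by ext <;> simp [eta, hre, h]))⟩
  · exact ⟨1, isUnit_one, Or.inr (Or.inl (by ext <;> simp [hre, h]))⟩
  · exact ⟨phi - 1, IsUnit.of_mul_eq_one phi (by rw [mul_comm]; exact phi_mul_inv),
      Or.inl (by ext <;> simp [phi, hre, h])⟩

lemma intCast_dvd_iff (n : ℤ) (x : O) : (n : O) ∣ x ↔ n ∣ x.re ∧ n ∣ x.im := by
  constructor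
  · rintro ⟨y, rfl⟩; simp
  · rintro ⟨⟨a, ha⟩, ⟨b, hb⟩⟩; exact ⟨⟨a, b⟩, by ext <;> simp [ha, hb]⟩

lemma two_dvd_iff (x : O) : (2 : O) ∣ x ↔ 2 ∣ x.re ∧ 2 ∣ x.im := intCast_dvd_iff 2 x

/-- `2` is inert, so `O/2` is the field with four elements and odd elements satisfy `x³ ≡ 1`. -/
lemma odd_cube {x : O} (h : ¬ (2 : O) ∣ x) : ∃ k : O, x ^ 3 = 1 + 2 * k := by
  suffices (2 : O) ∣ x ^ 3 - 1 by
    obtain ⟨k, hk⟩ := this; exact ⟨k, by linear_combination hk⟩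
  rw [two_dvd_iff] at h ⊢
  obtain ⟨a, b⟩ := x
  simp only [pow_succ, pow_zero, one_mul, re_sub, re_mul, im_mul, im_sub, re_one, im_one] at h ⊢
  rcases Int.even_or_odd' a with ⟨m, rfl | rfl⟩ <;> rcases Int.even_or_odd' b with ⟨n, rfl | rfl⟩ <;>
    ring_nf at h ⊢ <;> omega

lemma two_dvd_of_odd_mul {x y : O} (h : ¬ (2 : O) ∣ x) (hxy : (2 : O) ∣ x * y) : (2 : O) ∣ y := by
  obtain ⟨k, hk⟩ := odd_cube h
  obtain ⟨m, hm⟩ := hxy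
  exact ⟨x ^ 2 * m - k * y, by linear_combination (-y) * hk + x ^ 2 * hm⟩

lemma two_dvd_of_sq {x : O} (hx : (2 : O) ∣ x * x) : (2 : O) ∣ x := by
  by_contra h; exact h (two_dvd_of_odd_mul h hx)

/-- Reduction modulo the prime `√5`, which sends `φ` to `3`. -/
def red5 : O →+* ZMod 5 where
  toFun x := x.re + x.im * 3
  map_one' := by simp
  map_zero' := by simp
  map_add' x y := by simp; ring
  map_mul' x y := by
    simp
    have : (9 : ZMod 5) = 4 := by decide
    linear_combination (-(x.im : ZMod 5) * y.im) * this

lemma red5_apply (x : O) : red5 x = x.re + x.im * 3 := rfl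

lemma eta_dvd_of_red5 {x : O} (h : red5 x = 0) : eta ∣ x := by
  rw [red5_apply] at h
  have : ((x.re + x.im * 3 : ℤ) : ZMod 5) = 0 := by push_cast; exact h
  rw [ZMod.intCast_zmod_eq_zero_iff_dvd] at this
  obtain ⟨k, hk⟩ := this
  push_cast at hk
  refine ⟨⟨2 * k - x.im, k⟩, ?_⟩
  ext <;> simp [eta] <;> linarith

lemma red5_eta : red5 eta = 0 := by rw [red5_apply]; simp [eta]

lemma eta_dvd_of_sq {x : O} (hx : eta ∣ x * x) : eta ∣ x := by
  apply eta_dvd_of_red5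
  obtain ⟨m, hm⟩ := hx
  have : red5 x * red5 x = 0 := by rw [← map_mul, hm, map_mul, red5_eta, zero_mul]
  have hp : Fact (Nat.Prime 5) := ⟨Nat.prime_five⟩
  exact mul_self_eq_zero.1 this

/-- `2` and `eta` are squarefree. -/
lemma isUnit_of_sq_dvd {d x : O} (hx : x = 1 ∨ x = 2 ∨ x = eta) (h : d * d ∣ x) : IsUnit d := by
  apply isUnit_of_norm
  have h1 : nm d * nm d ∣ nm x := by rw [← map_mul]; exact map_dvd nm h
  have h2 : nm d * nm d ∣ 4 ∨ nm d * nm d ∣ 5 := by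
    rcases hx with rfl | rfl | rfl
    · left; exact h1.trans (by simp)
    · left; simpa [nm_def] using h1
    · right; simpa [nm_def, eta] using h1
  have h3 : nm d ≠ 2 ∧ nm d ≠ -2 := by
    rw [nm_def]
    have : ∀ a b : ZMod 5, a * a + a * b - b * b ≠ 2 ∧ a * a + a * b - b * b ≠ -2 := by decide
    have := this d.re d.im
    constructor
    · intro h; apply this.1; have := congrArg (Int.cast : ℤ → ZMod 5) h; push_cast at this; linear_combination this
    · intro h; apply this.2; have := congrArg (Int.cast : ℤ → ZMod 5) h; push_cast at this; linear_combination this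
  have h4 : nm d * nm d ≤ 5 := by
    rcases h2 with h | h
    · have := Int.le_of_dvd (by norm_num) h; linarith
    · exact Int.le_of_dvd (by norm_num) h
  have h5 : nm d ≠ 0 := by
    intro h0; rw [h0] at h2; omega
  have : -3 < nm d := by nlinarith
  have : nm d < 3 := by nlinarith
  omega

end

/-! ### Totally positive definite matrices and small vectors -/

section

open QuadraticAlgebra Matrix

/-- The volume of the ball of radius `√r` in even dimension `2k`. -/
lemma volume_sq_lt {ι : Type} [Fintype ι] {k : ℕ} (hk : Fintype.card ι = 2 * k)
    (hk0 : 0 < k) {r : ℝ} (hr : 0 < r) :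
    MeasureTheory.volume {x : ι → ℝ | ∑ i, x i ^ 2 < r} =
      ENNReal.ofReal (r ^ k * Real.pi ^ k / (k.factorial : ℝ)) := by
  have hne : Nonempty ι := Fintype.card_pos_iff.1 (by omega)
  have hf : Module.finrank ℝ (EuclideanSpace ℝ ι) = 2 * k := by simp [hk]
  have h := InnerProductSpace.volume_ball_of_dim_even hf 0 (√r)
  rw [← (PiLp.volume_preserving_toLp ι).measure_preimage
      measurableSet_ball.nullMeasurableSet, hf, ← ENNReal.ofReal_pow (by positivity),
      ← ENNReal.ofReal_mul (by positivity), pow_mul, Real.sq_sqrt hr.le, ← mul_div_assoc] at h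
  rw [← h]
  congr 1
  ext x
  simp only [Set.mem_ofPred_eq, Set.mem_preimage, Metric.mem_ball, dist_zero_right,
    EuclideanSpace.norm_eq, Real.norm_eq_abs, sq_abs]
  rw [Real.sqrt_lt_sqrt_iff (by positivity)]

/-- Minkowski's theorem for the ellipsoid `‖L z‖² < r` and the lattice `ℤ^{2k}`. -/
lemma minkowski_real {ι : Type} [Fintype ι] [DecidableEq ι] {k : ℕ}
    (hk : Fintype.card ι = 2 * k) (hk0 : 0 < k) (L : Matrix ι ι ℝ) (hL : L.det ≠ 0)
    {r : ℝ} (hr : 0 < r)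
    (hvol : 4 ^ k * |L.det| < r ^ k * Real.pi ^ k / (k.factorial : ℝ)) :
    ∃ z : ι → ℤ, z ≠ 0 ∧ ∑ i, ((L *ᵥ (fun j => (z j : ℝ))) i) ^ 2 < r := by
  set b := Pi.basisFun ℝ ι
  set S : Set (ι → ℝ) := {x : ι → ℝ | ∑ i, x i ^ 2 < r} with hS
  set f : (ι → ℝ) →ₗ[ℝ] (ι → ℝ) := Matrix.toLin' L
  have hdet : LinearMap.det f = L.det := LinearMap.det_toLin' L
  have hconvS : Convex ℝ S := by
    have : ConvexOn ℝ Set.univ (fun x : ι → ℝ => ∑ i, x i ^ 2) := by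
      have h1 : ∀ i ∈ (Finset.univ : Finset ι),
          ConvexOn ℝ Set.univ (fun x : ι → ℝ => x i ^ 2) := by
        intro i _
        have := (even_two.convexOn_pow (𝕜 := ℝ)).comp_linearMap (LinearMap.proj (R := ℝ) (φ := fun _ : ι => ℝ) i)
        simpa [Function.comp_def] using this
      have h2 := Finset.sum_induction (fun (i : ι) (x : ι → ℝ) => x i ^ 2)
        (fun g => ConvexOn ℝ Set.univ g) (fun _ _ => ConvexOn.add) (convexOn_const 0 convex_univ) h1
      convert h2 using 1
      ext x; simp
    simpa [hS] using this.convex_lt r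
  have hv : MeasureTheory.volume (ZSpan.fundamentalDomain b) * 2 ^ Module.finrank ℝ (ι → ℝ) <
      MeasureTheory.volume (f ⁻¹' S) := by
    rw [MeasureTheory.Measure.addHaar_preimage_linearMap _ (by rw [hdet]; exact hL),
      volume_sq_lt hk hk0 hr, ZSpan.volume_fundamentalDomain, ← ENNReal.ofReal_mul (by positivity)]
    have : (Matrix.of b).det = 1 := by
      have : (Matrix.of b) = 1 := by
        ext i j; simp [b, Matrix.one_apply, Pi.single_apply, eq_comm]
      rw [this, det_one]
    rw [this, abs_one, ENNReal.ofReal_one, one_mul, Module.finrank_pi, hk, hdet, pow_mul,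
      show (2 ^ 2 : ENNReal) ^ k = ENNReal.ofReal (4 ^ k) by
        rw [ENNReal.ofReal_pow (by norm_num)]; norm_num]
    apply (ENNReal.ofReal_lt_ofReal_iff_of_nonneg (by positivity)).2
    rw [abs_inv, inv_mul_eq_div, lt_div_iff₀ (abs_pos.2 hL)]
    exact hvol
  have : Countable (Submodule.span ℤ (Set.range b)).toAddSubgroup :=
    inferInstanceAs (Countable (Submodule.span ℤ (Set.range b)))
  obtain ⟨⟨x, hxL⟩, hx0, hxs⟩ :=
    MeasureTheory.exists_ne_zero_mem_lattice_of_measure_mul_two_pow_lt_measure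
      (ZSpan.isAddFundamentalDomain' b MeasureTheory.volume)
      (s := f ⁻¹' S) (by intro x hx; simpa [hS] using hx) (hconvS.linear_preimage f) hv
  have hxL' : x ∈ Submodule.span ℤ (Set.range b) := hxL
  replace hxL' := (b.mem_span_iff_repr_mem ℤ x).1 hxL'
  choose z hz using hxL'
  have hzx : (fun j => (z j : ℝ)) = x := by
    ext j; have := hz j; simpa [b] using this
  refine ⟨z, ?_, ?_⟩
  · rintro rfl
    apply hx0
    ext1
    simp [← hzx]; rfl
  · rw [hzx]; simpa [hS, f] using hxs

/-- Total positive definiteness of a symmetric matrix over `O`. -/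
def TPD {n : ℕ} (G : Matrix (Fin n) (Fin n) O) : Prop :=
  (G.map s1).PosDef ∧ (G.map s2).PosDef

lemma TPD.symm {n : ℕ} {G : Matrix (Fin n) (Fin n) O} (h : TPD G) : Gᵀ = G := by
  ext1 i j
  apply s1_injective
  have := congrFun (congrFun h.1.isHermitian i) j
  simpa using this

lemma TPD.det {n : ℕ} {G : Matrix (Fin n) (Fin n) O} (h : TPD G) : TP G.det := by
  constructor
  · have := h.1.det_pos
    rwa [RingHom.map_det]
  · have := h.2.det_pos
    rwa [RingHom.map_det]

lemma map_dot {n : ℕ} (s : O →+* ℝ) (G : Matrix (Fin n) (Fin n) O) (u v : Fin n → O) :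
    s (u ⬝ᵥ G *ᵥ v) = (s ∘ u) ⬝ᵥ (G.map s) *ᵥ (s ∘ v) := by
  rw [RingHom.map_dotProduct]
  congr 1
  ext i; simp [RingHom.map_mulVec]

lemma TPD.pos {n : ℕ} {G : Matrix (Fin n) (Fin n) O} (h : TPD G) {v : Fin n → O} (hv : v ≠ 0) :
    TP (v ⬝ᵥ G *ᵥ v) := by
  constructor
  · rw [map_dot]
    have := h.1.dotProduct_mulVec_pos (x := s1 ∘ v) (by
      intro h0; apply hv; ext1 i; apply s1_injective; simpa using congrFun h0 i)
    simpa using this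
  · rw [map_dot]
    have := h.2.dotProduct_mulVec_pos (x := s2 ∘ v) (by
      intro h0; apply hv; ext1 i; apply s2_injective; simpa using congrFun h0 i)
    simpa using this

lemma PosDef_conj {n m : ℕ} {s : O →+* ℝ} (hs : Function.Injective s)
    {G : Matrix (Fin n) (Fin n) O} (h : (G.map s).PosDef)
    (B : Matrix (Fin n) (Fin m) O) {C : Matrix (Fin m) (Fin n) O} {d : O} (hd : d ≠ 0)
    (hC : C * B = d • 1) : ((Bᵀ * G * B).map s).PosDef := by
  have e : (Bᵀ * G * B).map s = (B.map s)ᴴ * (G.map s) * (B.map s) := by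
    rw [Matrix.map_mul, Matrix.map_mul]; rfl
  rw [e]
  apply h.conjTranspose_mul_mul_same
  intro u v huv
  have h2 : (C.map s) * (B.map s) = s d • 1 := by
    rw [← Matrix.map_mul, hC]
    ext i j; by_cases hij : i = j <;> simp [hij]
  have h3 : (C.map s) *ᵥ ((B.map s) *ᵥ u) = (C.map s) *ᵥ ((B.map s) *ᵥ v) := by
    simp only [huv]
  rw [mulVec_mulVec, mulVec_mulVec, h2, smul_mulVec, smul_mulVec, one_mulVec, one_mulVec] at h3
  exact smul_right_injective _ ((map_ne_zero_iff _ hs).2 hd) h3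

/-- Total positive definiteness is inherited by the Gram matrix of linearly independent vectors
(the columns of `B`, independence being witnessed by a left inverse up to a scalar). -/
lemma TPD.conj {n m : ℕ} {G : Matrix (Fin n) (Fin n) O} (h : TPD G) (B : Matrix (Fin n) (Fin m) O)
    {C : Matrix (Fin m) (Fin n) O} {d : O} (hd : d ≠ 0) (hC : C * B = d • 1) :
    TPD (Bᵀ * G * B) :=
  ⟨PosDef_conj s1_injective h.1 B hd hC, PosDef_conj s2_injective h.2 B hd hC⟩

lemma TPD.of_smul {n : ℕ} {G : Matrix (Fin n) (Fin n) O} {d : O} (hd : TP d) (h : TPD (d • G)) :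
    TPD G := by
  have key : ∀ s : O →+* ℝ, 0 < s d → ((d • G).map s).PosDef → (G.map s).PosDef := by
    intro s hs hp
    have e : G.map s = (s d)⁻¹ • (d • G).map s := by
      ext i j; simp [hs.ne']
    rw [e]
    exact hp.smul (inv_pos.2 hs)
  exact ⟨key s1 hd.1 h.1, key s2 hd.2 h.2⟩

open scoped MatrixOrder in
lemma exists_sqrt {n : ℕ} {A : Matrix (Fin n) (Fin n) ℝ} (h : A.PosDef) :
    ∃ B : Matrix (Fin n) (Fin n) ℝ, A = Bᵀ * B := by
  obtain ⟨B, hB⟩ := CStarAlgebra.nonneg_iff_eq_star_mul_self.mp h.posSemidef.nonneg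
  exact ⟨B, by rw [hB]; rfl⟩

/-- Minkowski's theorem for a totally positive definite form over `O`, measured by `T`. -/
lemma minkowski {n : ℕ} (hn : 0 < n) {G : Matrix (Fin n) (Fin n) O} (h : TPD G) {r : ℕ}
    (hr : 0 < r)
    (hvol : 4 ^ n * √(nm G.det) < (r : ℝ) ^ n * Real.pi ^ n / (n.factorial : ℝ)) :
    ∃ v : Fin n → O, v ≠ 0 ∧ T (v ⬝ᵥ G *ᵥ v) < r := by
  obtain ⟨B1, hB1⟩ := exists_sqrt h.1
  obtain ⟨B2, hB2⟩ := exists_sqrt h.2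
  have h5 : (0:ℝ) < √5 := by positivity
  set c1 := Real.goldenRatio / √5 with hc1
  set c2 := (-Real.goldenConj) / √5 with hc2
  have hc1p : 0 < c1 := div_pos Real.goldenRatio_pos h5
  have hc2p : 0 < c2 := div_pos (by linarith [Real.goldenConj_neg]) h5
  set D := fromBlocks (√c1 • B1) 0 0 (√c2 • B2) with hD
  set P : Matrix (Fin n ⊕ Fin n) (Fin n ⊕ Fin n) ℝ :=
    fromBlocks 1 (Real.goldenRatio • 1) 1 (Real.goldenConj • 1) with hP
  have hPdet : P.det = (-√5) ^ n := by
    rw [hP, det_fromBlocks_one₁₁, one_mul, ← sub_smul, det_smul, det_one, mul_one, Fintype.card_fin]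
    congr 1
    linarith [Real.goldenRatio_sub_goldenConj]
  have hdd : (B1.det * B2.det) ^ 2 = nm G.det := by
    rw [← s1_mul_s2, RingHom.map_det, RingHom.map_det]
    have e1 : (s1.mapMatrix G).det = B1.det ^ 2 := by
      change (G.map s1).det = _
      rw [hB1, det_mul, det_transpose, sq]
    have e2 : (s2.mapMatrix G).det = B2.det ^ 2 := by
      change (G.map s2).det = _
      rw [hB2, det_mul, det_transpose, sq]
    rw [e1, e2]; ring
  have hcc : √c1 * √c2 * √5 = 1 := by
    rw [← Real.sqrt_mul hc1p.le, ← Real.sqrt_mul (by positivity), hc1, hc2]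
    rw [Real.sqrt_eq_one, div_mul_div_comm, Real.mul_self_sqrt (by norm_num)]
    rw [mul_neg, Real.goldenRatio_mul_goldenConj]; norm_num
  have hLdet : |(D * P).det| = √(nm G.det) := by
    rw [det_mul, hPdet, hD, det_fromBlocks_zero₂₁, det_smul, det_smul, Fintype.card_fin, ← hdd,
      Real.sqrt_sq_eq_abs]
    have : √c1 ^ n * B1.det * (√c2 ^ n * B2.det) * (-√5) ^ n =
        (B1.det * B2.det) * (-1) ^ n * (√c1 * √c2 * √5) ^ n := by
      rw [neg_pow, mul_pow, mul_pow]; ring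
    rw [this, hcc, one_pow, mul_one, abs_mul, abs_pow, abs_neg, abs_one, one_pow, mul_one]
  have hnn : (0:ℝ) < nm G.det := by exact_mod_cast h.det.norm_pos
  obtain ⟨z, hz0, hz⟩ := minkowski_real (k := n) (by simp [two_mul]) hn (D * P)
    (by rw [← abs_pos, hLdet]; exact Real.sqrt_pos.2 hnn) (r := r) (by exact_mod_cast hr)
    (by rw [hLdet]; exact hvol)
  refine ⟨fun i => ⟨z (Sum.inl i), z (Sum.inr i)⟩, ?_, ?_⟩
  · intro h0
    apply hz0
    ext i
    rcases i with i | i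
    · exact congrArg QuadraticAlgebra.re (congrFun h0 i)
    · exact congrArg QuadraticAlgebra.im (congrFun h0 i)
  · set v : Fin n → O := fun i => ⟨z (Sum.inl i), z (Sum.inr i)⟩ with hv
    have key : (T (v ⬝ᵥ G *ᵥ v) : ℝ) = ∑ i, (((D * P) *ᵥ (fun j => (z j : ℝ))) i) ^ 2 := by
      rw [T_eq, map_dot, map_dot, hB1, hB2, ← mulVec_mulVec (M := D), hD, fromBlocks_mulVec,
        hP, fromBlocks_mulVec, Fintype.sum_sum_type]
      have e1 : (1 : Matrix (Fin n) (Fin n) ℝ) *ᵥ ((fun j => (z j : ℝ)) ∘ Sum.inl) +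
          (Real.goldenRatio • (1 : Matrix (Fin n) (Fin n) ℝ)) *ᵥ ((fun j => (z j : ℝ)) ∘ Sum.inr) =
          s1 ∘ v := by
        ext i; simp [hv, s1_apply, smul_mulVec, mul_comm]
      have e2 : (1 : Matrix (Fin n) (Fin n) ℝ) *ᵥ ((fun j => (z j : ℝ)) ∘ Sum.inl) +
          (Real.goldenConj • (1 : Matrix (Fin n) (Fin n) ℝ)) *ᵥ ((fun j => (z j : ℝ)) ∘ Sum.inr) =
          s2 ∘ v := by
        ext i; simp [hv, s2_apply, smul_mulVec, mul_comm]
      rw [Sum.elim_comp_inl, Sum.elim_comp_inr, e1, e2]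
      simp only [Sum.elim_inl, Sum.elim_inr, zero_mulVec,
        add_zero, zero_add, smul_mulVec, Pi.smul_apply, smul_eq_mul, mul_pow,
        Real.sq_sqrt hc1p.le, Real.sq_sqrt hc2p.le, ← Finset.mul_sum]
      rw [← mulVec_mulVec, ← mulVec_mulVec, dotProduct_mulVec _ B1ᵀ, dotProduct_mulVec _ B2ᵀ, vecMul_transpose, vecMul_transpose]
      simp only [dotProduct, sq, hc1, hc2]
    have : (T (v ⬝ᵥ G *ᵥ v) : ℝ) < r := by rw [key]; exact hz
    exact_mod_cast this

end

/-! ### Orthonormal bases of unimodular lattices of rank at most three -/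

section

open QuadraticAlgebra Matrix

/-- Bézout: the entries of `w` have a common divisor that is a linear combination of them. -/
lemma exists_gcd {n : ℕ} (w : Fin n → O) : ∃ (d : O) (u : Fin n → O), (∀ i, d ∣ w i) ∧ w ⬝ᵥ u = d := by
  obtain ⟨d, hd⟩ := IsPrincipalIdealRing.principal (Ideal.span (Set.range w))
  have hmem : d ∈ Ideal.span (Set.range w) := by rw [hd]; exact Submodule.mem_span_singleton_self d
  rw [Ideal.mem_span_range_iff_exists_fun] at hmem
  obtain ⟨c, hc⟩ := hmem
  refine ⟨d, c, fun i => ?_, ?_⟩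
  · have : w i ∈ Ideal.span (Set.range w) := Ideal.subset_span ⟨i, rfl⟩
    rw [hd] at this
    exact Ideal.mem_span_singleton.1 this
  · rw [← hc]; simp [dotProduct, mul_comm]

/-- If `Λ(u) = 1`, then `u` together with a basis of the (free) kernel of `Λ` is a basis. -/
lemma exists_basis_ker {n : ℕ} (l u : Fin (n + 1) → O) (h : l ⬝ᵥ u = 1) :
    ∃ U : Matrix (Fin (n + 1)) (Fin (n + 1)) O, IsUnit U.det ∧ (∀ i, U i 0 = u i) ∧
      ∀ j : Fin n, l ⬝ᵥ (fun i => U i j.succ) = 0 := by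
  set f : (Fin (n + 1) → O) →ₗ[O] O :=
    { toFun := fun v => l ⬝ᵥ v, map_add' := by simp, map_smul' := by simp } with hf
  have hfa : ∀ v, f v = l ⬝ᵥ v := fun _ => rfl
  obtain ⟨m, ⟨b⟩⟩ := Submodule.nonempty_basis_of_pid (Pi.basisFun O (Fin (n + 1))) (LinearMap.ker f)
  let B := Module.Basis.mkFinCons u b (by
      intro c x hx hcx
      have := congrArg f hcx
      rw [map_add, map_smul, LinearMap.mem_ker.1 hx, hfa, h] at this
      simpa using this) (by
      intro z
      refine ⟨-f z, ?_⟩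
      rw [LinearMap.mem_ker, map_add, map_smul, hfa u, h]; simp)
  have hm : m = n := by
    have h1 := Module.finrank_eq_card_basis B
    have h2 := Module.finrank_eq_card_basis (Pi.basisFun O (Fin (n + 1)))
    rw [h1] at h2; simpa using h2
  subst hm
  refine ⟨(Pi.basisFun O (Fin (m + 1))).toMatrix B, ?_, ?_, ?_⟩
  · have := (Pi.basisFun O (Fin (m + 1))).invertibleToMatrix B
    exact (Matrix.isUnit_iff_isUnit_det _).1 (isUnit_of_invertible _)
  · intro i; simp [Module.Basis.toMatrix_apply, B]
  · intro j
    have : (fun i => (Pi.basisFun O (Fin (m + 1))).toMatrix B i j.succ) = (b j : Fin (m + 1) → O) := by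
      ext1 i; simp [Module.Basis.toMatrix_apply, B]
    rw [this, ← hfa]
    exact (b j).2

lemma gram_conj {n m : ℕ} (G : Matrix (Fin n) (Fin n) O) (B : Matrix (Fin n) (Fin m) O)
    (a b : Fin m → O) : (B *ᵥ a) ⬝ᵥ G *ᵥ (B *ᵥ b) = a ⬝ᵥ (Bᵀ * G * B) *ᵥ b := by
  rw [← mulVec_mulVec, ← mulVec_mulVec, dotProduct_mulVec a Bᵀ, vecMul_transpose]

lemma gram_symm {n : ℕ} {G : Matrix (Fin n) (Fin n) O} (hG : Gᵀ = G) (a b : Fin n → O) :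
    a ⬝ᵥ G *ᵥ b = b ⬝ᵥ G *ᵥ a := by
  rw [dotProduct_mulVec, ← mulVec_transpose, hG, dotProduct_comm]

/-- The orthogonal complement of `v` in the lattice with Gram matrix `G`, when some `u` has inner
product `1` with `v`: the Gram determinant is `det G · Q(v)` up to the square of a unit. -/
lemma exists_compl {n : ℕ} {G : Matrix (Fin (n + 1)) (Fin (n + 1)) O} (hG : TPD G)
    (v u : Fin (n + 1) → O) (h : v ⬝ᵥ G *ᵥ u = 1) :
    ∃ B : Matrix (Fin (n + 1)) (Fin n) O, TPD (Bᵀ * G * B) ∧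
      (∀ w, v ⬝ᵥ G *ᵥ (B *ᵥ w) = 0) ∧
      ∃ e, IsUnit e ∧ (Bᵀ * G * B).det = e * e * G.det * (v ⬝ᵥ G *ᵥ v) := by
  have hl : ∀ w, (G *ᵥ v) ⬝ᵥ w = v ⬝ᵥ G *ᵥ w := fun w => by
    rw [dotProduct_comm, gram_symm hG.symm]
  obtain ⟨U, hU, hU0, hUs⟩ := exists_basis_ker (G *ᵥ v) u (by rw [hl, h])
  have hUi : U⁻¹ * U = 1 := nonsing_inv_mul U hU
  have hUi' : U * U⁻¹ = 1 := mul_nonsing_inv U hU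
  refine ⟨U.submatrix id Fin.succ, ?_, ?_, U.det, hU, ?_⟩
  · apply hG.conj (C := U⁻¹.submatrix Fin.succ id) (d := 1) _ one_ne_zero
    rw [one_smul, ← submatrix_mul _ _ _ _ _ Function.bijective_id, hUi]
    exact submatrix_one _ (Fin.succ_injective _)
  · intro w
    rw [← hl]
    have : (G *ᵥ v) ᵥ* (U.submatrix id Fin.succ) = 0 := by
      ext1 j; exact hUs j
    rw [dotProduct_mulVec, this, zero_dotProduct]
  · set W := Uᵀ * G * U with hW
    set x := U⁻¹ *ᵥ v with hx
    have hUx : U *ᵥ x = v := by rw [hx, mulVec_mulVec, hUi', one_mulVec]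
    have hsub : (U.submatrix id Fin.succ)ᵀ * G * (U.submatrix id Fin.succ) =
        W.submatrix Fin.succ Fin.succ := by
      rfl
    have hWx : W *ᵥ x = Pi.single 0 1 := by
      rw [hW, ← mulVec_mulVec, hUx, ← mulVec_mulVec, mulVec_transpose]
      ext1 j
      refine Fin.cases ?_ (fun j => ?_) j
      · have : ((G *ᵥ v) ᵥ* U) 0 = (G *ᵥ v) ⬝ᵥ u := by
          simp only [vecMul, dotProduct]; simp [hU0]
        rw [this, hl, h]; simp
      · have : ((G *ᵥ v) ᵥ* U) j.succ = 0 := hUs j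
        rw [this]; simp
    have hadj : W.adjugate *ᵥ (Pi.single 0 1) = W.det • x := by
      rw [← hWx, mulVec_mulVec, adjugate_mul, smul_mulVec, one_mulVec]
    have h0 := congrFun hadj 0
    rw [mulVec_single_one, col_apply, adjugate_fin_succ_eq_det_submatrix] at h0
    simp at h0
    have hx0 : x 0 = v ⬝ᵥ G *ᵥ v := by
      conv_rhs => rw [← hUx, gram_conj, ← hW, hWx]
      simp
    rw [hsub, h0, hW, det_mul, det_mul, det_transpose, hx0]
    ring

/-- The lattice with Gram matrix `G` has an orthonormal basis. -/
def HasONB {n : ℕ} (G : Matrix (Fin n) (Fin n) O) : Prop :=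
  ∃ e : Fin n → Fin n → O, ∀ i j, e i ⬝ᵥ G *ᵥ e j = if i = j then 1 else 0

/-- A vector of norm `1` splits off a unimodular lattice, leaving one of rank one less. -/
lemma hasONB_succ {n : ℕ} (ih : ∀ K : Matrix (Fin n) (Fin n) O, TPD K → IsUnit K.det → HasONB K)
    {G : Matrix (Fin (n + 1)) (Fin (n + 1)) O} (hG : TPD G) (hd : IsUnit G.det)
    {v : Fin (n + 1) → O} (hv : v ⬝ᵥ G *ᵥ v = 1) : HasONB G := by
  obtain ⟨B, hB, hvB, e, he, hdet⟩ := exists_compl hG v v hv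
  obtain ⟨f, hf⟩ := ih _ hB (by rw [hdet, hv, mul_one]; exact (he.mul he).mul hd)
  refine ⟨Fin.cons v (fun i => B *ᵥ f i), ?_⟩
  intro i j
  refine Fin.cases ?_ (fun i => ?_) i <;> refine Fin.cases ?_ (fun j => ?_) j
  · simpa using hv
  · simpa [(Fin.succ_ne_zero j).symm] using hvB (f j)
  · rw [gram_symm hG.symm]
    simpa [(Fin.succ_ne_zero i)] using hvB (f i)
  · simp only [Fin.cons_succ, gram_conj, hf, Fin.succ_inj]

lemma gram_smul {n : ℕ} (G : Matrix (Fin n) (Fin n) O) (e : O) (v : Fin n → O) :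
    (e • v) ⬝ᵥ G *ᵥ (e • v) = e * e * (v ⬝ᵥ G *ᵥ v) := by
  simp [mulVec_smul, mul_assoc]

lemma nm_of_TP_unit {x : O} (hx : TP x) (hu : IsUnit x) : nm x = 1 := by
  have h1 := hx.norm_pos
  rcases norm_of_isUnit hu with h | h
  · exact h
  · omega

/-- A nonzero vector with `T < 2` has norm a unit square, hence rescales to norm `1`. -/
lemma exists_one_of_T {n : ℕ} {G : Matrix (Fin n) (Fin n) O} (hG : TPD G) {v : Fin n → O}
    (hv : v ≠ 0) (hT : T (v ⬝ᵥ G *ᵥ v) < 2) : ∃ w, w ⬝ᵥ G *ᵥ w = 1 := by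
  have hp := hG.pos hv
  have := T_pos hp
  obtain ⟨e, -, he⟩ := T_eq_one hp (by omega)
  exact ⟨e • v, by rw [gram_smul, he]⟩

lemma pi_sq : (9.85 : ℝ) < Real.pi ^ 2 := by
  have := Real.pi_gt_d4
  nlinarith

lemma exists_one_rank1 {G : Matrix (Fin 1) (Fin 1) O} (hG : TPD G) (hd : IsUnit G.det) :
    ∃ w, w ⬝ᵥ G *ᵥ w = 1 := by
  obtain ⟨v, hv, hT⟩ := minkowski (n := 1) (by norm_num) hG (r := 2) (by norm_num) (by
    rw [nm_of_TP_unit hG.det hd]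
    have := Real.pi_gt_three
    simp; linarith)
  exact exists_one_of_T hG hv (by exact_mod_cast hT)

lemma exists_one_rank2 {G : Matrix (Fin 2) (Fin 2) O} (hG : TPD G) (hd : IsUnit G.det) :
    ∃ w, w ⬝ᵥ G *ᵥ w = 1 := by
  obtain ⟨v, hv, hT⟩ := minkowski (n := 2) (by norm_num) hG (r := 2) (by norm_num) (by
    rw [nm_of_TP_unit hG.det hd]
    have := pi_sq
    norm_num [Nat.factorial]; linarith)
  exact exists_one_of_T hG hv (by exact_mod_cast hT)

/-- Totally positive units are squares of units. -/
lemma unit_sq {x : O} (hx : TP x) (hu : IsUnit x) : ∃ e, IsUnit e ∧ e * e * x = 1 := by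
  have hG : TPD (Matrix.diagonal (fun _ : Fin 1 => x)) := by
    constructor
    · rw [diagonal_map (map_zero s1)]; exact PosDef.diagonal (fun _ => hx.1)
    · rw [diagonal_map (map_zero s2)]; exact PosDef.diagonal (fun _ => hx.2)
  obtain ⟨w, hw⟩ := exists_one_rank1 hG (by simpa using hu)
  have : w 0 * w 0 * x = 1 := by
    rw [← hw]; simp [dotProduct, mulVec_diagonal]; ring
  exact ⟨w 0, IsUnit.of_mul_eq_one (w 0 * x) (by rw [← this]; ring), this⟩

lemma exists_one_of_unit {n : ℕ} {G : Matrix (Fin n) (Fin n) O} {v : Fin n → O} {x : O}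
    (h : v ⬝ᵥ G *ᵥ v = x) (hx : TP x) (hu : IsUnit x) : ∃ w, w ⬝ᵥ G *ᵥ w = 1 := by
  obtain ⟨e, -, he⟩ := unit_sq hx hu
  exact ⟨e • v, by rw [gram_smul, h, he]⟩

lemma hasONB_0 (G : Matrix (Fin 0) (Fin 0) O) : HasONB G := ⟨0, fun i => i.elim0⟩

lemma hasONB_1 {G : Matrix (Fin 1) (Fin 1) O} (hG : TPD G) (hd : IsUnit G.det) : HasONB G :=
  (exists_one_rank1 hG hd).elim fun _ h => hasONB_succ (fun K _ _ => hasONB_0 K) hG hd h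

lemma hasONB_2 {G : Matrix (Fin 2) (Fin 2) O} (hG : TPD G) (hd : IsUnit G.det) : HasONB G :=
  (exists_one_rank2 hG hd).elim fun _ h => hasONB_succ (fun _ h1 h2 => hasONB_1 h1 h2) hG hd h

lemma sq_dvd_gram {n : ℕ} (G : Matrix (Fin n) (Fin n) O) {v : Fin n → O} {d : O}
    (h : ∀ i, d ∣ v i) : d * d ∣ v ⬝ᵥ G *ᵥ v := by
  choose w hw using h
  have : v = d • w := by ext1 i; simp [hw]
  rw [this, gram_smul]; exact Dvd.intro _ rfl

/-- A nonzero vector with `T < 3` rescales to norm `1`, `2` or `eta`. -/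
lemma exists_short {n : ℕ} {G : Matrix (Fin n) (Fin n) O} (hG : TPD G) {v : Fin n → O}
    (hv : v ≠ 0) (hT : T (v ⬝ᵥ G *ᵥ v) < 3) :
    ∃ w, w ⬝ᵥ G *ᵥ w = 1 ∨ w ⬝ᵥ G *ᵥ w = 2 ∨ w ⬝ᵥ G *ᵥ w = eta := by
  obtain ⟨e, -, he⟩ := T_lt_three (hG.pos hv) hT
  exact ⟨e • v, by rw [gram_smul]; exact he⟩

/-- A vector of norm `1`, `2` or `eta` in a binary lattice extends to a basis; Gram matrix
`[δ, s; s, c]`. -/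
lemma binary_basis {K : Matrix (Fin 2) (Fin 2) O} (hK : TPD K) {k : Fin 2 → O} {δ : O}
    (hδ : δ = 1 ∨ δ = 2 ∨ δ = eta) (hk : k ⬝ᵥ K *ᵥ k = δ) :
    ∃ k' : Fin 2 → O, δ * (k' ⬝ᵥ K *ᵥ k') - (k ⬝ᵥ K *ᵥ k') * (k ⬝ᵥ K *ᵥ k') = K.det := by
  obtain ⟨d, u, hd, hu⟩ := exists_gcd k
  have hdu : IsUnit d := isUnit_of_sq_dvd hδ (hk ▸ sq_dvd_gram K hd)
  obtain ⟨d', hd'⟩ := hdu.exists_left_inv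
  have h1 : k 0 * (d' * u 0) + k 1 * (d' * u 1) = 1 := by
    rw [← hd', ← hu]; simp [dotProduct, Fin.sum_univ_two]; ring
  refine ⟨![-(d' * u 1), d' * u 0], ?_⟩
  have hs : K 1 0 = K 0 1 := congrFun (congrFun hK.symm 0) 1
  rw [← hk, det_fin_two]
  simp only [dotProduct, mulVec, Fin.sum_univ_two, cons_val_zero, cons_val_one, hs]
  linear_combination (K 0 0 * K 1 1 - K 0 1 * K 0 1) * (k 0 * (d' * u 0) + k 1 * (d' * u 1) + 1) * h1

/-- A binary lattice of determinant `δε`, `ε` a unit, with a vector `k` of prime norm `δ` has a vector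
of norm `1`: for a basis `k, m` the prime `δ` divides the inner product `⟨k, m⟩ = δs`, and `m - sk`
has norm `ε`. -/
lemma exists_one_binary {K : Matrix (Fin 2) (Fin 2) O} (hK : TPD K) {k : Fin 2 → O} {δ ε : O}
    (hδ : δ = 2 ∨ δ = eta) (hk : k ⬝ᵥ K *ᵥ k = δ) (hε : IsUnit ε) (hdet : K.det = δ * ε) :
    ∃ w, w ⬝ᵥ K *ᵥ w = 1 := by
  obtain ⟨k', hk'⟩ := binary_basis hK (Or.inr hδ) hk
  rw [hdet] at hk'
  have hδ0 : δ ≠ 0 := by rcases hδ with rfl | rfl <;> decide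
  have hs2 : δ ∣ (k ⬝ᵥ K *ᵥ k') * (k ⬝ᵥ K *ᵥ k') :=
    ⟨(k' ⬝ᵥ K *ᵥ k') - ε, by linear_combination -hk'⟩
  have hs : δ ∣ (k ⬝ᵥ K *ᵥ k') := by
    rcases hδ with rfl | rfl
    · exact two_dvd_of_sq hs2
    · exact eta_dvd_of_sq hs2
  obtain ⟨s, hs⟩ := hs
  have hδp : TP δ := by
    rw [← hk]; apply hK.pos; rintro rfl; apply hδ0; rw [← hk]; simp
  have hεp : TP ε := hδp.of_mul (hdet ▸ hK.det)
  refine exists_one_of_unit (v := k' - s • k) (x := ε) ?_ hεp hε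
  rw [mulVec_sub, sub_dotProduct, dotProduct_sub, dotProduct_sub, mulVec_smul, smul_dotProduct,
    smul_dotProduct, dotProduct_smul, dotProduct_smul, gram_symm hK.symm k' k, hk, hs]
  rw [hs] at hk'
  apply mul_left_cancel₀ hδ0
  simp only [smul_eq_mul]
  linear_combination hk'

/-- In a unimodular lattice a vector `v` of squarefree norm is primitive, so some inner product with
`v` is `1`. -/
lemma exists_dual {n : ℕ} {G : Matrix (Fin n) (Fin n) O} (hG : TPD G) (hd : IsUnit G.det)
    {v : Fin n → O} {δ : O} (hδ : δ = 1 ∨ δ = 2 ∨ δ = eta) (hv : v ⬝ᵥ G *ᵥ v = δ) :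
    ∃ u, v ⬝ᵥ G *ᵥ u = 1 := by
  obtain ⟨d, u, hdv, hu⟩ := exists_gcd (G *ᵥ v)
  have hdv' : ∀ i, d ∣ v i := by
    have : v = G⁻¹ *ᵥ (G *ᵥ v) := by rw [mulVec_mulVec, nonsing_inv_mul _ hd, one_mulVec]
    intro i
    rw [this]
    change d ∣ ∑ j, G⁻¹ i j * (G *ᵥ v) j
    exact Finset.dvd_sum fun j _ => Dvd.dvd.mul_left (hdv j) _
  have hdu : IsUnit d := isUnit_of_sq_dvd hδ (hv ▸ sq_dvd_gram G hdv')
  obtain ⟨d', hd'⟩ := hdu.exists_left_inv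
  refine ⟨d' • u, ?_⟩
  rw [mulVec_smul, dotProduct_smul, gram_symm hG.symm, dotProduct_comm, hu, smul_eq_mul, hd']

/-- Minkowski's bound for binary lattices whose determinant has norm at most `5`. -/
lemma exists_short_rank2 {K : Matrix (Fin 2) (Fin 2) O} (hK : TPD K) (hn : nm K.det ≤ 5) :
    ∃ w, w ⬝ᵥ K *ᵥ w = 1 ∨ w ⬝ᵥ K *ᵥ w = 2 ∨ w ⬝ᵥ K *ᵥ w = eta := by
  obtain ⟨v, hv, hT⟩ := minkowski (n := 2) (by norm_num) hK (r := 3) (by norm_num) (by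
    have h1 : √(nm K.det : ℝ) < 2.5 := by
      rw [Real.sqrt_lt' (by norm_num)]
      have : (nm K.det : ℝ) ≤ 5 := by exact_mod_cast hn
      norm_num; linarith
    have := pi_sq
    norm_num [Nat.factorial]; linarith)
  exact exists_short hK hv (by exact_mod_cast hT)

/-- A unimodular ternary lattice with a vector of norm `2` has one of norm `1`: the orthogonal
complement is binary of determinant `2` up to a unit square, with a short vector of norm `1`, `2` or
`eta`, the last of which is impossible. -/
lemma exists_one_of_two {G : Matrix (Fin 3) (Fin 3) O} (hG : TPD G) (hd : IsUnit G.det)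
    {v : Fin 3 → O} (hv : v ⬝ᵥ G *ᵥ v = 2) : ∃ w, w ⬝ᵥ G *ᵥ w = 1 := by
  obtain ⟨u, hu⟩ := exists_dual hG hd (Or.inr (Or.inl rfl)) hv
  obtain ⟨B, hB, -, e, he, hdet⟩ := exists_compl hG v u hu
  have hε : IsUnit (e * e * G.det) := (he.mul he).mul hd
  rw [hv, mul_comm] at hdet
  have hεp : TP (e * e * G.det) := (TP_sq he.ne_zero).mul hG.det
  obtain ⟨k, hk⟩ := exists_short_rank2 hB (by
    rw [hdet, map_mul, nm_of_TP_unit hεp hε]; simp [nm_def])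
  rcases hk with hk | hk | hk
  · exact ⟨B *ᵥ k, by rw [gram_conj, hk]⟩
  · obtain ⟨w, hw⟩ := exists_one_binary hB (Or.inl rfl) hk hε hdet
    exact ⟨B *ᵥ w, by rw [gram_conj, hw]⟩
  · exfalso
    -- `-2 · unit` would be a square modulo `√5`
    obtain ⟨k', hk'⟩ := binary_basis hB (Or.inr (Or.inr rfl)) hk
    rw [hdet] at hk'
    obtain ⟨f, hf, hfe⟩ := unit_sq hεp hε
    obtain ⟨g, hg⟩ := hf.exists_left_inv
    have h1 := congrArg red5 hfe
    have h2 := congrArg red5 hk'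
    simp only [map_mul, map_sub, red5_eta, map_one, zero_mul, zero_sub, map_ofNat] at h1 h2
    generalize red5 (k ⬝ᵥ (Bᵀ * G * B) *ᵥ k') = s at h2
    rw [← mul_assoc] at h1
    have h3 : -((s * red5 f) * (s * red5 f)) = 2 := by
      linear_combination (red5 f * red5 f) * h2 + 2 * h1
    revert h3
    generalize s * red5 f = t
    revert t; decide

/-- Minkowski's bound gives a vector of norm `1`, `2` or `eta`. If the norm is `eta`, the orthogonal
complement has determinant `eta` up to a unit square, and its short vectors are treated in the
same way. -/
lemma exists_one_rank3 {G : Matrix (Fin 3) (Fin 3) O} (hG : TPD G) (hd : IsUnit G.det) :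
    ∃ w, w ⬝ᵥ G *ᵥ w = 1 := by
  obtain ⟨v, hv, hT⟩ := minkowski (n := 3) (by norm_num) hG (r := 3) (by norm_num) (by
    rw [nm_of_TP_unit hG.det hd]
    have h1 := pi_sq
    have h2 := Real.pi_gt_three
    have : 29.55 < Real.pi ^ 3 := by nlinarith
    norm_num [Nat.factorial]; linarith)
  obtain ⟨v, hv | hv | hv⟩ := exists_short hG hv (by exact_mod_cast hT)
  · exact ⟨v, hv⟩
  · exact exists_one_of_two hG hd hv
  obtain ⟨u, hu⟩ := exists_dual hG hd (Or.inr (Or.inr rfl)) hv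
  obtain ⟨B, hB, -, e, he, hdet⟩ := exists_compl hG v u hu
  have hε : IsUnit (e * e * G.det) := (he.mul he).mul hd
  rw [hv, mul_comm] at hdet
  have hεp : TP (e * e * G.det) := (TP_sq he.ne_zero).mul hG.det
  obtain ⟨k, hk⟩ := exists_short_rank2 hB (by
    rw [hdet, map_mul, nm_of_TP_unit hεp hε]; simp [nm_def, eta])
  rcases hk with hk | hk | hk
  · exact ⟨B *ᵥ k, by rw [gram_conj, hk]⟩
  · exact exists_one_of_two hG hd (v := B *ᵥ k) (by rw [gram_conj, hk])
  · obtain ⟨w, hw⟩ := exists_one_binary hB (Or.inr rfl) hk hε hdet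
    exact ⟨B *ᵥ w, by rw [gram_conj, hw]⟩

/-- Totally positive definite unimodular lattices of rank `3` are sums of squares. -/
lemma hasONB_3 {G : Matrix (Fin 3) (Fin 3) O} (hG : TPD G) (hd : IsUnit G.det) : HasONB G :=
  (exists_one_rank3 hG hd).elim fun _ h => hasONB_succ (fun _ h1 h2 => hasONB_2 h1 h2) hG hd h

end

/-! ### Odd unimodular lattices of rank four -/

section

open QuadraticAlgebra Matrix

/-- Twice the form `N`, where `N 0 0 = 4ν`, on the overlattice obtained by adjoining half of the
first basis vector: the quadratic form is twice
`ν y₀² + y₀ ∑ N₀ⱼ yⱼ + ∑ Nⱼₖ yⱼ yₖ` (`j, k ≥ 1`), the value of `N` at `(y₀/2, y₁, y₂, y₃)`. -/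
def halfGram (N : Matrix (Fin 4) (Fin 4) O) (ν : O) : Matrix (Fin 4) (Fin 4) O :=
  !![2 * ν, N 0 1, N 0 2, N 0 3;
     N 1 0, 2 * N 1 1, 2 * N 1 2, 2 * N 1 3;
     N 2 0, 2 * N 2 1, 2 * N 2 2, 2 * N 2 3;
     N 3 0, 2 * N 3 1, 2 * N 3 2, 2 * N 3 3]

/-- The linear form `∑ N₀ⱼ yⱼ`, `j ≥ 1`. -/
def tailForm (N : Matrix (Fin 4) (Fin 4) O) (y : Fin 4 → O) : O :=
  N 0 1 * y 1 + N 0 2 * y 2 + N 0 3 * y 3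

/-- The vector `y` with its first coordinate replaced by `0`. -/
def tail (y : Fin 4 → O) : Fin 4 → O := ![0, y 1, y 2, y 3]

lemma halfGram_apply {N : Matrix (Fin 4) (Fin 4) O} (hN : Nᵀ = N) (ν : O) (y z : Fin 4 → O) :
    y ⬝ᵥ halfGram N ν *ᵥ z = 2 * ν * y 0 * z 0 + y 0 * tailForm N z + z 0 * tailForm N y +
      2 * (tail y ⬝ᵥ N *ᵥ tail z) := by
  have h (i j) : N i j = N j i := congrFun (congrFun hN j) i
  simp [dotProduct, mulVec, Fin.sum_univ_four, halfGram, tailForm, tail, h 1 0, h 2 0, h 3 0]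
  ring

lemma halfGram_scale {N : Matrix (Fin 4) (Fin 4) O} {ν : O} (hν : N 0 0 = 4 * ν) :
    (diagonal ![1, 2, 2, 2])ᵀ * N * diagonal ![1, 2, 2, 2] = (2 : O) • halfGram N ν := by
  refine Matrix.ext fun i j => ?_
  rw [diagonal_transpose, mul_diagonal, diagonal_mul]
  fin_cases i <;> fin_cases j <;> simp [halfGram, hν] <;> ring

lemma TPD_halfGram {N : Matrix (Fin 4) (Fin 4) O} {ν : O} (hN : TPD N) (hν : N 0 0 = 4 * ν) :
    TPD (halfGram N ν) := by
  have h : TPD ((2 : O) • halfGram N ν) := by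
    rw [← halfGram_scale hν]
    apply hN.conj (C := diagonal ![2, 1, 1, 1]) (d := 2) _ (by decide)
    rw [diagonal_mul_diagonal, smul_one_eq_diagonal]
    congr 1
    funext i
    fin_cases i <;> simp
  exact TPD.of_smul ⟨by rw [map_ofNat]; norm_num, by rw [map_ofNat]; norm_num⟩ h

lemma halfGram_det {N : Matrix (Fin 4) (Fin 4) O} {ν : O} (hd : N.det = 1) (hν : N 0 0 = 4 * ν) :
    (halfGram N ν).det = 4 := by
  have h := congrArg det (halfGram_scale hν)
  rw [det_mul, det_mul, det_transpose, det_diagonal, hd, det_smul] at h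
  simp [Fin.prod_univ_four] at h
  have h16 : (16 : O) ≠ 0 := by decide
  apply mul_left_cancel₀ h16
  linear_combination -h

/-- Vectors with even first coordinate are those of the original lattice, on which `halfGram` is
twice the form `N`. -/
lemma exists_one_of_even {N : Matrix (Fin 4) (Fin 4) O} (hN : Nᵀ = N) {ν : O}
    (hν : N 0 0 = 4 * ν) {x : Fin 4 → O} (hx : x ⬝ᵥ halfGram N ν *ᵥ x = 2) (h0 : 2 ∣ x 0) :
    ∃ z, z ⬝ᵥ N *ᵥ z = 1 := by
  obtain ⟨t, ht⟩ := h0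
  refine ⟨![t, x 1, x 2, x 3], ?_⟩
  have h (i j) : N i j = N j i := congrFun (congrFun hN j) i
  have h2 : (2 : O) ≠ 0 := by decide
  rw [halfGram_apply hN, ht] at hx
  simp [dotProduct, mulVec, Fin.sum_univ_four, tailForm, tail] at hx
  simp [dotProduct, mulVec, Fin.sum_univ_four, h 1 0, h 2 0, h 3 0, hν]
  apply mul_left_cancel₀ h2
  linear_combination hx

/-- Modulo `2` the form `M` is the square of a linear form, only one diagonal entry being odd. -/
lemma gram_mod_two {M : Matrix (Fin 4) (Fin 4) O} (hM : Mᵀ = M)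
    (hj : ∀ j : Fin 3, 2 ∣ M j.succ j.succ) (w : Fin 4 → O) :
    ∃ k, w ⬝ᵥ M *ᵥ w = M 0 0 * w 0 * w 0 + 2 * k := by
  have h (i j) : M i j = M j i := congrFun (congrFun hM j) i
  obtain ⟨a, ha⟩ := hj 0
  obtain ⟨b, hb⟩ := hj 1
  obtain ⟨c, hc⟩ := hj 2
  refine ⟨M 0 1 * w 0 * w 1 + M 0 2 * w 0 * w 2 + M 0 3 * w 0 * w 3 + M 1 2 * w 1 * w 2 +
    M 1 3 * w 1 * w 3 + M 2 3 * w 2 * w 3 + a * w 1 * w 1 + b * w 2 * w 2 + c * w 3 * w 3, ?_⟩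
  simp at ha hb hc
  simp [dotProduct, mulVec, Fin.sum_univ_four, h 1 0, h 2 0, h 3 0, h 2 1, h 3 1, h 3 2, ha]
  have hb' : M 2 2 = 2 * b := hb
  have hc' : M 3 3 = 2 * c := hc
  rw [hb', hc']
  ring

/-- The congruence `gram_mod_two`, transported to the inverse matrix `N`. -/
lemma tail_mod_two {M N : Matrix (Fin 4) (Fin 4) O} (hM : Mᵀ = M) (hMN : M * N = 1)
    (hj : ∀ j : Fin 3, 2 ∣ M j.succ j.succ) (y : Fin 4 → O) :
    ∃ k, tail y ⬝ᵥ N *ᵥ tail y = M 0 0 * tailForm N y * tailForm N y + 2 * k := by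
  obtain ⟨k, hk⟩ := gram_mod_two hM hj (N *ᵥ tail y)
  refine ⟨k, ?_⟩
  have h0 : (N *ᵥ tail y) 0 = tailForm N y := by
    simp [mulVec, dotProduct, Fin.sum_univ_four, tail, tailForm]
  rw [h0, mulVec_mulVec, hMN, one_mulVec, dotProduct_comm] at hk
  exact hk

/-- The first coordinate is the inner product with a vector of the lattice, built from the first
column of `M = N⁻¹`. -/
lemma halfGram_dual {M N : Matrix (Fin 4) (Fin 4) O} (hN : Nᵀ = N) (hNM : N * M = 1) {ν : O}
    (hν : N 0 0 = 4 * ν) (y : Fin 4 → O) :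
    ![2 * M 0 0, M 1 0, M 2 0, M 3 0] ⬝ᵥ halfGram N ν *ᵥ y = y 0 := by
  have h (i j) : N i j = N j i := congrFun (congrFun hN j) i
  have e (i) := congrFun (congrFun hNM i) 0
  have e0 := e 0
  have e1 := e 1
  have e2 := e 2
  have e3 := e 3
  simp only [mul_apply, Fin.sum_univ_four, hν] at e0 e1 e2 e3
  simp at e0 e1 e2 e3
  simp only [h 1 0, h 2 0, h 3 0, h 2 1, h 3 1, h 3 2] at e0 e1 e2 e3
  simp [dotProduct, mulVec, Fin.sum_univ_four, halfGram, h 1 0, h 2 0, h 3 0, h 2 1, h 3 1, h 3 2]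
  linear_combination y 0 * e0 + 2 * y 1 * e1 + 2 * y 2 * e2 + 2 * y 3 * e3


/-- Gram matrices of the columns: `N` with an orthonormal basis gives its inverse as `CᵀC`. -/
lemma gram_of_hasONB {n : ℕ} {M N : Matrix (Fin n) (Fin n) O} (hNM : N * M = 1) (h : HasONB N) :
    ∃ C : Matrix (Fin n) (Fin n) O, M = Cᵀ * C := by
  obtain ⟨e, he⟩ := h
  have h1 : of e * N * (of e)ᵀ = 1 := by
    refine Matrix.ext fun i j => ?_
    rw [mul_assoc, mul_apply]
    have := he i j
    rw [one_apply, ← this]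
    rfl
  rw [mul_assoc] at h1
  have h2 : N * (of e)ᵀ * of e = 1 := mul_eq_one_comm.1 h1
  refine ⟨of e, ?_⟩
  exact left_inv_eq_right_inv (mul_eq_one_comm.1 hNM) (by rw [← mul_assoc]; exact h2)


lemma gram_add_smul {n : ℕ} {G : Matrix (Fin n) (Fin n) O} (v a b : Fin n → O) (s t : O) :
    v ⬝ᵥ G *ᵥ (s • a + t • b) = s * (v ⬝ᵥ G *ᵥ a) + t * (v ⬝ᵥ G *ᵥ b) := by
  simp [mulVec_add, mulVec_smul]

/-- A vector of norm `2` whose first coordinate is odd belongs to an orthogonal frame of vectors of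
norm `2`. -/
lemma exists_frame {N : Matrix (Fin 4) (Fin 4) O} (hN : TPD N) (hd : N.det = 1) {ν : O}
    (hν : N 0 0 = 4 * ν) {l x : Fin 4 → O} (hl : ∀ y, l ⬝ᵥ halfGram N ν *ᵥ y = y 0)
    (hx : x ⬝ᵥ halfGram N ν *ᵥ x = 2) (h0 : ¬ 2 ∣ x 0) :
    ∃ E : Fin 4 → Fin 4 → O, E 0 = x ∧
      ∀ i j, E i ⬝ᵥ halfGram N ν *ᵥ E j = if i = j then 2 else 0 := by
  have hW := TPD_halfGram hN hν
  obtain ⟨κ, hκ⟩ := odd_cube h0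
  have hu : x ⬝ᵥ halfGram N ν *ᵥ (x 0 ^ 2 • l + (-κ) • x) = 1 := by
    rw [gram_add_smul, hx, gram_symm hW.symm, hl]
    linear_combination hκ
  obtain ⟨B, hB, hxB, e, he, hdet⟩ := exists_compl hW x _ hu
  have heven : ∀ i j, 2 ∣ (Bᵀ * halfGram N ν * B) i j := by
    intro i j
    have hcol : ∀ i, x ⬝ᵥ halfGram N ν *ᵥ (B.col i) = 0 := fun i => by
      rw [← mulVec_single_one]; exact hxB _
    have hij : (Bᵀ * halfGram N ν * B) i j = B.col i ⬝ᵥ halfGram N ν *ᵥ B.col j := by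
      rw [Matrix.mul_assoc]; rfl
    rw [hij, halfGram_apply hN.symm]
    have h1 := hcol i
    have h2 := hcol j
    rw [halfGram_apply hN.symm] at h1 h2
    apply two_dvd_of_odd_mul h0
    generalize tail x ⬝ᵥ N *ᵥ tail (B.col i) = r1 at *
    generalize tail x ⬝ᵥ N *ᵥ tail (B.col j) = r2 at *
    generalize tail (B.col i) ⬝ᵥ N *ᵥ tail (B.col j) = r3 at *
    generalize B.col i 0 = a at *
    generalize B.col j 0 = b at *
    refine ⟨ν * x 0 * a * b + x 0 * r3 - a * (ν * x 0 * b + r2) - b * (ν * x 0 * a + r1)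
      - a * b * tailForm N x, ?_⟩
    linear_combination a * h2 + b * h1
  choose K hK using heven
  have hK' : Bᵀ * halfGram N ν * B = (2 : O) • of K := by
    refine Matrix.ext fun i j => ?_
    simp [hK]
  have hKT : TPD (of K) := TPD.of_smul (d := 2)
    ⟨by rw [map_ofNat]; norm_num, by rw [map_ofNat]; norm_num⟩ (hK' ▸ hB)
  have hKd : (of K).det = e * e := by
    rw [hK', det_smul, halfGram_det hd hν, hx] at hdet
    simp at hdet
    have h8 : (8 : O) ≠ 0 := by decide
    apply mul_left_cancel₀ h8
    linear_combination hdet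
  obtain ⟨g, hg⟩ := hasONB_3 hKT (by rw [hKd]; exact he.mul he)
  refine ⟨Fin.cons x (fun i => B *ᵥ g i), rfl, fun i j => ?_⟩
  refine Fin.cases ?_ (fun i => ?_) i <;> refine Fin.cases ?_ (fun j => ?_) j
  · simpa using hx
  · simpa [(Fin.succ_ne_zero j).symm] using hxB (g j)
  · rw [gram_symm hW.symm]
    simpa [(Fin.succ_ne_zero i)] using hxB (g i)
  · simp only [Fin.cons_succ, gram_conj, hK', smul_mulVec, dotProduct_smul, hg, Fin.succ_inj]
    split_ifs <;> simp


/-- An orthogonal frame `E` of vectors of norm `2` with odd first coordinates yields a vector of norm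
`1` for `N`: the half sum `w` of the frame lies in the lattice, `w` and `w - E 0` have norm `2`, and one
of them has even first coordinate. -/
lemma exists_one_of_frame {M N : Matrix (Fin 4) (Fin 4) O} (hM : Mᵀ = M) (hN : TPD N)
    (hMN : M * N = 1) {ν : O} (hν : N 0 0 = 4 * ν) (ha : ¬ 2 ∣ M 0 0)
    (hj : ∀ j : Fin 3, 2 ∣ M j.succ j.succ) {l : Fin 4 → O}
    (hl : ∀ y, l ⬝ᵥ halfGram N ν *ᵥ y = y 0) (hl0 : l 0 = 2 * M 0 0)
    {E : Fin 4 → Fin 4 → O} (h0 : ¬ 2 ∣ E 0 0)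
    (hE : ∀ i j, E i ⬝ᵥ halfGram N ν *ᵥ E j = if i = j then 2 else 0) :
    ∃ z, z ⬝ᵥ N *ᵥ z = 1 := by
  have hW := TPD_halfGram hN hν
  have h2 : (2 : O) ≠ 0 := by decide
  -- the first coordinates of the frame vectors are congruent modulo `2`
  have hcong : ∀ i, 2 ∣ E i 0 - E 0 0 := by
    intro i
    by_cases hi : i = 0
    · simp [hi]
    have hq : ∀ i, ∃ k, 1 = ν * E i 0 ^ 2 + E i 0 * tailForm N (E i) +
        M 0 0 * tailForm N (E i) ^ 2 + 2 * k := by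
      intro i
      have h1 := hE i i
      rw [halfGram_apply hN.symm, if_pos rfl] at h1
      obtain ⟨k, hk⟩ := tail_mod_two hM hMN hj (E i)
      refine ⟨k, ?_⟩
      apply mul_left_cancel₀ h2
      linear_combination 2 * hk - h1
    obtain ⟨k, hk⟩ := hq i
    obtain ⟨k0, hk0⟩ := hq 0
    have h3 := hE 0 i
    rw [halfGram_apply hN.symm, if_neg (Ne.symm hi)] at h3
    generalize tail (E 0) ⬝ᵥ N *ᵥ tail (E i) = r at *
    generalize tailForm N (E i) = n at *
    generalize tailForm N (E 0) = n0 at *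
    generalize E i 0 = m at *
    generalize E 0 0 = m0 at *
    generalize M 0 0 = a at *
    apply two_dvd_of_sq
    obtain ⟨p, hp⟩ : ∃ p, m0 * n = m * n0 + 2 * p :=
      ⟨-(ν * m0 * m) - m * n0 - r, by linear_combination h3⟩
    -- `m0² = m0² q(e_i) ≡ m² q(e_0) = m²` modulo `2`
    refine ⟨m0 ^ 2 * k - m ^ 2 * k0 + m0 * m * p + a * (2 * m * n0 * p + 2 * p ^ 2)
      + m ^ 2 - m0 * m, ?_⟩
    linear_combination m0 ^ 2 * hk - m ^ 2 * hk0 +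
      (m0 * m + a * (m0 * n + m * n0 + 2 * p)) * hp
  choose c hc using hcong
  obtain ⟨κ, hκ⟩ := odd_cube h0
  -- the frame expansion of `2l`
  have h2l : (2 : O) • l = ∑ i, E i 0 • E i := by
    have hdet : (of E * halfGram N ν).det ≠ 0 := by
      intro h
      have h1 : of E * halfGram N ν * (of E)ᵀ = (2 : O) • 1 := by
        refine Matrix.ext fun i j => ?_
        rw [mul_assoc, mul_apply]
        have := hE i j
        rw [Matrix.smul_apply, one_apply, smul_eq_mul, mul_ite, mul_one, mul_zero, ← this]
        rfl
      have h4 := congrArg det h1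
      rw [det_mul, h, zero_mul, det_smul] at h4
      simp at h4
      exact absurd h4 (by decide)
    rw [← sub_eq_zero]
    apply eq_zero_of_mulVec_eq_zero hdet
    funext i
    have : (of E * halfGram N ν) *ᵥ ((2 : O) • l - ∑ i, E i 0 • E i) =
        fun i => E i ⬝ᵥ halfGram N ν *ᵥ ((2 : O) • l - ∑ i, E i 0 • E i) := by
      rw [← mulVec_mulVec]; rfl
    rw [this, Pi.zero_apply]
    beta_reduce
    rw [mulVec_sub, dotProduct_sub, mulVec_smul, dotProduct_smul,
      gram_symm hW.symm (E i) l, hl, Fin.sum_univ_four]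
    simp only [mulVec_add, mulVec_smul, dotProduct_add, dotProduct_smul, hE, smul_eq_mul]
    fin_cases i <;> simp <;> ring
  have h2l0 := congrFun h2l 0
  simp only [Fin.sum_univ_four, Pi.add_apply, Pi.smul_apply, smul_eq_mul, hl0] at h2l0
  have hm (i) : E i 0 = E 0 0 + 2 * c i := by linear_combination hc i
  set m := E 0 0 with hmdef
  set w : Fin 4 → O := m ^ 2 • l - ∑ i, (κ + m ^ 2 * c i) • E i with hw
  have h2w : (2 : O) • w = ∑ i, E i := by
    rw [hw, smul_sub, smul_comm, h2l, Finset.smul_sum, Finset.smul_sum, ← Finset.sum_sub_distrib]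
    refine Finset.sum_congr rfl fun i _ => ?_
    rw [smul_smul, smul_smul, ← sub_smul, hm i]
    have : m ^ 2 * (m + 2 * c i) - 2 * (κ + m ^ 2 * c i) = 1 := by linear_combination hκ
    rw [this, one_smul]
  have hww : w ⬝ᵥ halfGram N ν *ᵥ w = 2 := by
    have h4 := gram_smul (halfGram N ν) 2 w
    rw [h2w, Fin.sum_univ_four] at h4
    simp only [mulVec_add, dotProduct_add, add_dotProduct, hE] at h4
    simp at h4
    have : (4 : O) ≠ 0 := by decide
    apply mul_left_cancel₀ this
    linear_combination -h4
  have hw0 : w 0 = 2 * m + (c 0 + c 1 + c 2 + c 3) := by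
    have h5 := congrFun h2w 0
    simp only [Fin.sum_univ_four, Pi.add_apply, Pi.smul_apply, smul_eq_mul] at h5
    rw [hm 1, hm 2, hm 3, hm 0] at h5
    apply mul_left_cancel₀ h2
    linear_combination h5
  by_cases hσ : 2 ∣ c 0 + c 1 + c 2 + c 3
  · exact exists_one_of_even hN.symm hν hww (by rw [hw0]; exact dvd_add (Dvd.intro _ rfl) hσ)
  have hxw : E 0 ⬝ᵥ halfGram N ν *ᵥ w = 1 := by
    apply mul_left_cancel₀ h2
    rw [← smul_eq_mul, ← dotProduct_smul, ← mulVec_smul, h2w, Fin.sum_univ_four]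
    simp only [mulVec_add, dotProduct_add, hE]
    simp
  refine exists_one_of_even hN.symm hν (x := w - E 0) ?_ ?_
  · rw [mulVec_sub, sub_dotProduct, dotProduct_sub, dotProduct_sub, hww, hxw,
      gram_symm hW.symm w, hxw, hE, if_pos rfl]
    ring
  · obtain ⟨k, hk⟩ := odd_cube hσ
    have h6 : 2 ∣ c 0 + c 1 + c 2 + c 3 - m := by
      apply two_dvd_of_odd_mul ha
      have h4 : (4 : O) ≠ 0 := by decide
      have h7 : M 0 0 = m ^ 2 + m * (c 0 + c 1 + c 2 + c 3) +
          (c 0 ^ 2 + c 1 ^ 2 + c 2 ^ 2 + c 3 ^ 2) := by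
        apply mul_left_cancel₀ h4
        rw [hm 1, hm 2, hm 3] at h2l0
        have hc0 : c 0 = 0 := by
          apply mul_left_cancel₀ h2
          linear_combination -hm 0
        linear_combination h2l0 - 4 * (m + c 0) * hc0
      rw [h7]
      refine ⟨k - κ - (c 0 + c 1 + c 2 + c 3 - m) * (c 0 * c 1 + c 0 * c 2 + c 0 * c 3 +
        c 1 * c 2 + c 1 * c 3 + c 2 * c 3), ?_⟩
      linear_combination hk - hκ
    obtain ⟨q, hq⟩ := h6
    exact ⟨m + q, by rw [Pi.sub_apply, hw0]; linear_combination hq⟩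

/-- A totally positive definite symmetric matrix of determinant `1` with exactly one odd diagonal
entry `M₀₀`, whose inverse has `N₀₀` divisible by `4`, is a Gram matrix of the standard lattice. -/
theorem gram_of_unimodular {M : Matrix (Fin 4) (Fin 4) O} (hM : TPD M) (hd : M.det = 1)
    (ha : ¬ 2 ∣ M 0 0) (hj : ∀ j : Fin 3, 2 ∣ M j.succ j.succ) (h4 : 4 ∣ M.adjugate 0 0) :
    ∃ C : Matrix (Fin 4) (Fin 4) O, M = Cᵀ * C := by
  set N := M.adjugate with hNdef
  have hMN : M * N = 1 := by rw [mul_adjugate, hd, one_smul]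
  have hNM : N * M = 1 := by rw [adjugate_mul, hd, one_smul]
  have hNs : Nᵀ = N := by rw [hNdef, adjugate_transpose, hM.symm]
  have hN : TPD N := by
    have : N = Nᵀ * M * N := by rw [hNs, hNM, one_mul]
    rw [this]
    exact hM.conj N (C := M) (d := 1) one_ne_zero (by rw [hMN, one_smul])
  have hNd : N.det = 1 := by
    have := congrArg det hMN
    rwa [det_mul, hd, one_mul, det_one] at this
  obtain ⟨ν, hν⟩ := h4
  have hW := TPD_halfGram hN hν
  obtain ⟨x, hx⟩ : ∃ x, x ⬝ᵥ halfGram N ν *ᵥ x = 2 := by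
    obtain ⟨v, hv, hT⟩ := minkowski (n := 4) (by norm_num) hW (r := 4) (by norm_num) (by
      rw [halfGram_det hNd hν]
      have h1 := pi_sq
      have h2 : (97 : ℝ) < Real.pi ^ 4 := by nlinarith
      have h3 : nm (4 : O) = 4 ^ 2 := by decide
      rw [h3, Int.cast_pow, Real.sqrt_sq (by norm_num)]
      norm_num [Nat.factorial]; linarith)
    have hp := hW.pos hv
    obtain ⟨q, hq⟩ : ∃ q, v ⬝ᵥ halfGram N ν *ᵥ v = 2 * q :=
      ⟨ν * v 0 * v 0 + v 0 * tailForm N v + tail v ⬝ᵥ N *ᵥ tail v, by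
        rw [halfGram_apply hNs]; ring⟩
    rw [hq] at hp hT
    have hqp : TP q := TP.of_mul ⟨by rw [map_ofNat]; norm_num, by rw [map_ofNat]; norm_num⟩ hp
    have hT2 : T (2 * q) = 2 * T q := by simp [T]; ring
    have := T_pos hqp
    obtain ⟨e, -, he⟩ := T_eq_one hqp (by push_cast at hT; omega)
    exact ⟨e • v, by rw [gram_smul, hq]; linear_combination 2 * he⟩
  have hl := halfGram_dual hNs hNM hν
  obtain ⟨z, hz⟩ : ∃ z, z ⬝ᵥ N *ᵥ z = 1 := by
    by_cases h0 : 2 ∣ x 0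
    · exact exists_one_of_even hNs hν hx h0
    · obtain ⟨E, hE0, hE⟩ := exists_frame hN hNd hν hl hx h0
      exact exists_one_of_frame hM.symm hN hMN hν ha hj hl rfl (by rwa [hE0]) hE
  exact gram_of_hasONB hNM (hasONB_succ (fun _ h1 h2 => hasONB_3 h1 h2) hN
    (by rw [hNd]; exact isUnit_one) hz)

end

/-! ### Squares modulo rational primes -/

section

open QuadraticAlgebra

lemma intCast_dvd_of_dvd {a b : ℤ} (h : a ∣ b) : (a : O) ∣ (b : O) := by
  obtain ⟨k, rfl⟩ := h
  exact ⟨k, by push_cast; ring⟩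

lemma int_dvd_of_zmod {p : ℕ} {a b : ℤ} (h : (a : ZMod p) = b) : ((p : ℕ) : O) ∣ (a - b : O) := by
  have h1 : (p : ℤ) ∣ a - b := by
    rw [← ZMod.intCast_zmod_eq_zero_iff_dvd]; push_cast; rw [h, sub_self]
  have h2 := intCast_dvd_of_dvd h1
  push_cast at h2; exact h2

lemma charpoly_eq (α : O) : α * α = ((2 * α.re + α.im : ℤ) : O) * α - ((nm α : ℤ) : O) := by
  rw [nm_def]
  ext <;> simp <;> ring

/-- Modulo a prime inert in `O`, every integer is a square. -/
lemma int_isSquare_mod_inert {p : ℕ} [Fact p.Prime] (h5 : ¬ IsSquare (5 : ZMod p)) (r : ℤ) :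
    ∃ σ : O, (p : O) ∣ σ * σ - r := by
  by_cases hr : IsSquare (r : ZMod p)
  · obtain ⟨w, hw⟩ := hr
    obtain ⟨w, rfl⟩ := ZMod.intCast_surjective w
    have := int_dvd_of_zmod (p := p) (a := w * w) (b := r) (by push_cast; exact hw.symm)
    exact ⟨w, by push_cast at this; exact this⟩
  · have h50 : (5 : ZMod p) ≠ 0 := by rintro h; exact h5 (h ▸ IsSquare.zero)
    have hr0 : (r : ZMod p) ≠ 0 := by rintro h; exact hr (h ▸ IsSquare.zero)
    have hp2 : ringChar (ZMod p) ≠ 2 := by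
      rw [ZMod.ringChar_zmod_n]
      rintro rfl
      have h2 : (2 : ZMod 2) = 0 := by exact_mod_cast CharP.cast_eq_zero (ZMod 2) 2
      exact h5 ⟨1, by linear_combination 2 * h2⟩
    have hmul : IsSquare (5 * r : ZMod p) := by
      rw [← quadraticChar_one_iff_isSquare (mul_ne_zero h50 hr0), map_mul,
        quadraticChar_neg_one_iff_not_isSquare.2 h5, quadraticChar_neg_one_iff_not_isSquare.2 hr]
      norm_num
    obtain ⟨w, hw⟩ := hmul
    obtain ⟨w', hw'⟩ := ZMod.intCast_surjective (w / 5)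
    have := int_dvd_of_zmod (p := p) (a := 5 * w' * w') (b := r) (by
      push_cast; rw [hw']; field_simp; rw [sq, ← hw])
    refine ⟨w' * ⟨-1, 2⟩, ?_⟩
    have e : (w' * ⟨-1, 2⟩ : O) * (w' * ⟨-1, 2⟩) = ((5 * w' * w' : ℤ) : O) := by
      ext <;> simp <;> ring
    rw [e]; exact this

/-- If `N(α) ≡ m²`, then `α (Tr α + 2m) ≡ (α + m)²`, and the integer `Tr α + 2m` is a square modulo the
inert prime `p`. -/
lemma isSquare_mod_inert_aux {p : ℕ} [Fact p.Prime] (h5 : ¬ IsSquare (5 : ZMod p)) {α : O} {m : ℤ}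
    (hm : ((nm α : ℤ) : ZMod p) = m * m) (hr : ((2 * α.re + α.im + 2 * m : ℤ) : ZMod p) ≠ 0) :
    ∃ ρ : O, (p : O) ∣ ρ * ρ - α := by
  set r : ℤ := 2 * α.re + α.im + 2 * m with hrdef
  obtain ⟨σ, hσ⟩ := int_isSquare_mod_inert h5 r
  obtain ⟨r', hr'⟩ := ZMod.intCast_surjective ((r : ZMod p)⁻¹)
  have h1 := int_dvd_of_zmod (p := p) (a := r * r') (b := 1) (by
    push_cast; rw [hr']; exact mul_inv_cancel₀ hr)
  have h2 := int_dvd_of_zmod (p := p) (a := m * m) (b := nm α) (by push_cast; exact hm.symm)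
  have hc := charpoly_eq α
  have h3 : ((r : ℤ) : O) = ((2 * α.re + α.im : ℤ) : O) + 2 * m := by rw [hrdef]; push_cast; ring
  refine ⟨(α + m) * σ * r', ?_⟩
  have e : (α + m) * σ * r' * ((α + m) * σ * r') - α = (α + m) * (α + m) * r' * r' * (σ * σ - r)
      + r * r' * r' * (((m * m : ℤ) : O) - ((nm α : ℤ) : O)) +
      α * (r * r' + 1) * (((r * r' : ℤ) : O) - ((1 : ℤ) : O)) := by
    push_cast
    linear_combination (r * r' * r' : O) * hc - (r * r' * r' * α : O) * h3
  rw [e]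
  exact dvd_add (dvd_add (Dvd.dvd.mul_left hσ _) (Dvd.dvd.mul_left h2 _)) (Dvd.dvd.mul_left h1 _)

/-- Modulo an inert prime, an element whose norm is a nonzero square is a square. -/
lemma isSquare_mod_inert {p : ℕ} [Fact p.Prime] (h5 : ¬ IsSquare (5 : ZMod p)) {α : O}
    (h0 : ((nm α : ℤ) : ZMod p) ≠ 0) (hm : IsSquare ((nm α : ℤ) : ZMod p)) :
    ∃ ρ : O, (p : O) ∣ ρ * ρ - α := by
  obtain ⟨m, hm⟩ := hm
  obtain ⟨m, rfl⟩ := ZMod.intCast_surjective m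
  by_cases hr : ((2 * α.re + α.im + 2 * m : ℤ) : ZMod p) = 0
  · refine isSquare_mod_inert_aux h5 (m := -m) (by rw [hm]; push_cast; ring) ?_
    intro hr'
    have h2 : (2 : ZMod p) ≠ 0 := by
      intro h
      apply h5
      have : (5 : ZMod p) = 1 := by linear_combination 2 * h
      rw [this]; exact IsSquare.one
    have h4 : (2 * 2 * m : ZMod p) = 0 := by
      push_cast at hr hr'; linear_combination hr - hr'
    have : (m : ZMod p) = 0 := by simpa [h2] using h4
    exact h0 (by rw [hm, this, zero_mul])
  · exact isSquare_mod_inert_aux h5 hm hr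

lemma isCoprime_cast {a b : ℕ} (h : a.Coprime b) : IsCoprime (a : O) (b : O) := by
  have := (Nat.isCoprime_iff_coprime.2 h).map (Int.castRingHom O)
  simpa using this

/-- Square roots modulo coprime moduli glue. -/
lemma isSquare_crt {p q : ℕ} (h : p.Coprime q) {α : O} (hp : ∃ ρ : O, (p : O) ∣ ρ * ρ - α)
    (hq : ∃ ρ : O, (q : O) ∣ ρ * ρ - α) : ∃ ρ : O, ((p * q : ℕ) : O) ∣ ρ * ρ - α := by
  obtain ⟨x, hx⟩ := hp
  obtain ⟨y, hy⟩ := hq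
  have hc := isCoprime_cast h
  obtain ⟨a, b, hab⟩ := isCoprime_cast h
  refine ⟨x * (b * q) + y * (a * p), ?_⟩
  rw [Nat.cast_mul]
  apply IsCoprime.mul_dvd hc
  · obtain ⟨k, hk⟩ := hx
    refine ⟨k + a * (y - x) * (2 * x + a * p * (y - x)), ?_⟩
    have : x * (b * q) + y * (a * p) = x + a * p * (y - x) := by linear_combination x * hab
    rw [this]; linear_combination hk
  · obtain ⟨k, hk⟩ := hy
    refine ⟨k + b * (x - y) * (2 * y + b * q * (x - y)), ?_⟩
    have : x * (b * q) + y * (a * p) = y + b * q * (x - y) := by linear_combination y * hab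
    rw [this]; linear_combination hk

/-- `-η = φ - 3` is a square modulo primes `ℓ ≡ 1 mod 5`, via a fifth root of unity `ζ` modulo `ℓ`:
at the two places over `ℓ` it equals `((ζ² - 1) ζ⁴)²` and `((ζ - 1) ζ²)²`. -/
lemma neg_eta_isSquare {p : ℕ} [Fact p.Prime] (h1 : p % 5 = 1) :
    ∃ ρ : O, (p : O) ∣ ρ * ρ - -eta := by
  obtain ⟨z, hz⟩ : ∃ z : (ZMod p)ˣ, orderOf z = 5 := by
    have : Fact (Nat.Prime 5) := ⟨by norm_num⟩
    apply exists_prime_orderOf_dvd_card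
    rw [ZMod.card_units]; omega
  obtain ⟨ζ, hζ⟩ : ∃ ζ : ZMod p, ζ = z.val := ⟨_, rfl⟩
  have hz5 : ζ ^ 5 = 1 := by
    have := pow_orderOf_eq_one z
    rw [hz] at this
    rw [hζ, ← Units.val_pow_eq_pow_val, this, Units.val_one]
  have hz1 : ζ - 1 ≠ 0 := by
    intro h
    have : z = 1 := Units.ext (by rw [← hζ, Units.val_one]; linear_combination h)
    rw [this, orderOf_one] at hz; norm_num at hz
  have hs : 1 + ζ + ζ ^ 2 + ζ ^ 3 + ζ ^ 4 = 0 := by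
    apply mul_left_cancel₀ hz1
    linear_combination hz5
  have h5 : (5 : ZMod p) ≠ 0 := by
    intro h
    have : p ∣ 5 := (ZMod.natCast_eq_zero_iff 5 p).1 (by exact_mod_cast h)
    have := (Nat.prime_dvd_prime_iff_eq (Fact.out : p.Prime) (by norm_num)).1 this
    omega
  set δ : ZMod p := 1 + 2 * (ζ + ζ ^ 4) with hδ
  have hδ2 : δ * δ = 5 := by
    rw [hδ]; linear_combination (8 + 4 * ζ ^ 3) * hz5 + 4 * hs
  have hδ0 : δ ≠ 0 := by rintro h; rw [h] at hδ2; exact h5 (by rw [← hδ2, mul_zero])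
  set A : ZMod p := (ζ ^ 2 - 1) * ζ ^ 4 with hA
  set B : ZMod p := (ζ - 1) * ζ ^ 2 with hB
  set f : ZMod p := -(ζ + ζ ^ 4) with hf
  have hf2 : f * f = f + 1 := by
    rw [hf]; linear_combination (2 + ζ ^ 3) * hz5 + hs
  have hA2 : A * A = f - 3 := by
    rw [hA, hf]; linear_combination (ζ ^ 7 - 2 * ζ ^ 5 + ζ ^ 3 + ζ ^ 2 - 2) * hz5 + hs
  have hB2 : B * B = (f + δ) - 3 := by
    rw [hB, hf, hδ]; linear_combination (ζ - 2) * hz5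
  obtain ⟨y, hy⟩ := ZMod.intCast_surjective ((B - A) / δ)
  obtain ⟨x, hx⟩ := ZMod.intCast_surjective (A - (B - A) / δ * f)
  rw [← hy] at hx
  have hy' : (y : ZMod p) * δ = B - A := by rw [hy]; field_simp
  have hfd : δ = 1 - 2 * f := by rw [hδ, hf]; ring
  have e1 : ((x:ZMod p) * x + y * y + 3) + (2 * x * y + y * y - 1) * f = 0 := by
    have : (x:ZMod p) + y * f = A := by rw [hx]; ring
    linear_combination (x + y * f + A) * this + hA2 - (y * y : ZMod p) * hf2
  have e2 : ((x:ZMod p) * x + y * y + 3) + (2 * x * y + y * y - 1) * (f + δ) = 0 := by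
    have : (x:ZMod p) + y * (f + δ) = B := by rw [hx, mul_add, hy']; ring
    have hg2 : (f + δ) * (f + δ) = f + δ + 1 := by rw [hfd]; linear_combination hf2
    linear_combination (x + y * (f + δ) + B) * this + hB2 - (y * y : ZMod p) * hg2
  have eV : (2 * x * y + y * y - 1 : ZMod p) = 0 := by
    have : (2 * x * y + y * y - 1 : ZMod p) * δ = 0 := by linear_combination e2 - e1
    simpa [hδ0] using this
  have eU : (x * x + y * y + 3 : ZMod p) = 0 := by linear_combination e1 - f * eV
  refine ⟨⟨x, y⟩, ?_⟩
  have hd := (intCast_dvd_iff (p : ℤ) ((⟨x, y⟩ : O) * ⟨x, y⟩ - -eta))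
  rw [Int.cast_natCast] at hd
  rw [hd]
  constructor
  · rw [← ZMod.intCast_zmod_eq_zero_iff_dvd]
    simp [eta]; linear_combination eU
  · rw [← ZMod.intCast_zmod_eq_zero_iff_dvd]
    simp [eta]; linear_combination eV

end

/-! ### Primes inert in `ℤ[φ]` -/

section

open QuadraticAlgebra
open scoped NumberTheorySymbols

/-- `J(R | n)` only depends on `n` modulo `4R`, and `4R ≡ 1` modulo `4R - 1`. -/
lemma jacobi_of_neg_one {R n : ℕ} (hR : 0 < R) (h : 4 * R ∣ n + 1) : J(R | n) = 1 := by
  have hodd : Odd n := by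
    obtain ⟨k, hk⟩ := h
    rw [Nat.odd_iff]
    have : n + 1 = 2 * (2 * R * k) := by rw [hk]; ring
    omega
  have hmod : n % (4 * R) = 4 * R - 1 := by
    obtain ⟨k, hk⟩ := h
    obtain ⟨k, rfl⟩ : ∃ j, k = j + 1 := ⟨k - 1, by
      have : k ≠ 0 := by rintro rfl; omega
      omega⟩
    have : n = (4 * R - 1) + 4 * R * k := by
      have : 4 * R * (k + 1) = 4 * R * k + 4 * R := by ring
      omega
    rw [this, Nat.add_mul_mod_self_left, Nat.mod_eq_of_lt (by omega)]
  rw [jacobiSym.mod_right' R hodd, hmod]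
  have hodd' : Odd (4 * R - 1) := by rw [Nat.odd_iff]; omega
  have h1 : (4 * (R : ℤ)) % ((4 * R - 1 : ℕ) : ℤ) = 1 % ((4 * R - 1 : ℕ) : ℤ) := by
    rw [Int.emod_eq_emod_iff_emod_sub_eq_zero]
    push_cast [show 1 ≤ 4 * R by omega]
    simp
  have h2 := jacobiSym.mod_left' h1
  rwa [jacobiSym.one_left, jacobiSym.mul_left, jacobiSym.at_four hodd', one_mul] at h2

/-- A positive odd number that is not a square has a Jacobi nonresidue. -/
lemma exists_jacobi_neg_one {n : ℕ} (hodd : Odd n) (hns : ¬ IsSquare n) :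
    ∃ u : ℕ, u.Coprime n ∧ J(u | n) = -1 := by
  obtain ⟨a, b, hab, hsq⟩ := Nat.sq_mul_squarefree n
  have hn0 : n ≠ 0 := by rintro rfl; exact hns ⟨0, rfl⟩
  have ha1 : a ≠ 1 := by rintro rfl; exact hns ⟨b, by rw [← hab]; ring⟩
  obtain ⟨q, hq, m, rfl⟩ := Nat.exists_prime_and_dvd ha1
  have : Fact q.Prime := ⟨hq⟩
  have hqm : q.Coprime m := Nat.coprime_of_squarefree_mul hsq
  have hq2 : q ≠ 2 := by
    rintro rfl
    have : 2 ∣ n := ⟨b ^ 2 * m, by rw [← hab]; ring⟩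
    rw [Nat.odd_iff] at hodd; omega
  obtain ⟨w, hw⟩ := FiniteField.exists_nonsquare (F := ZMod q) (by rwa [ZMod.ringChar_zmod_n])
  obtain ⟨k, M, hqM, hM⟩ := Nat.exists_eq_pow_mul_and_not_dvd hn0 q hq.ne_one
  have hqM' : q.Coprime M := (Nat.Prime.coprime_iff_not_dvd hq).2 hqM
  obtain ⟨u, hu1, hu2⟩ := Nat.chineseRemainder hqM' w.val 1
  have huw : ((u : ℤ) : ZMod q) = w := by
    have := (ZMod.natCast_eq_natCast_iff _ _ _).2 hu1
    rw [ZMod.natCast_zmod_val] at this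
    exact_mod_cast this
  have huq : J(u | q) = -1 := by
    exact ZMod.nonsquare_iff_jacobiSym_eq_neg_one.2 (by rw [huw]; exact hw)
  have hucq : u.Coprime q := by
    rw [Nat.coprime_comm, Nat.Prime.coprime_iff_not_dvd hq]
    intro h
    have : ((u : ℤ) : ZMod q) = 0 := by
      have := (ZMod.natCast_eq_zero_iff u q).2 h
      exact_mod_cast this
    exact hw (by rw [← huw, this]; exact IsSquare.zero)
  have hucM : u.Coprime M := by
    rw [Nat.coprime_iff_gcd_eq_one, hu2.gcd_eq]; simp
  have hucn : u.Coprime n := by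
    rw [hM]; exact Nat.Coprime.mul_right (hucq.pow_right k) hucM
  refine ⟨u, hucn, ?_⟩
  have hb0 : b ≠ 0 := by rintro rfl; simp at hab; exact hn0 hab.symm
  have hm0 : m ≠ 0 := by rintro rfl; simp at hab; exact hn0 hab.symm
  have hmM : m ∣ M := by
    have : m ∣ q ^ k * M := by rw [← hM, ← hab]; exact ⟨b ^ 2 * q, by ring⟩
    exact (Nat.Coprime.dvd_mul_left (hqm.symm.pow_right k)).1 this
  have hum : J(u | m) = 1 := by
    have h1 : (u : ℤ) % m = 1 % m := by exact_mod_cast hu2.of_dvd hmM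
    rw [jacobiSym.mod_left' h1, jacobiSym.one_left]
  have hub : u.Coprime b := Nat.Coprime.coprime_dvd_right ⟨b * (q * m), by rw [← hab]; ring⟩ hucn
  rw [← hab, jacobiSym.mul_right' _ (pow_ne_zero 2 hb0) (mul_ne_zero hq.ne_zero hm0),
    jacobiSym.mul_right' _ hq.ne_zero hm0, jacobiSym.pow_right, jacobiSym.sq_one (by
      rw [Int.gcd_natCast_natCast]; exact hub), huq, hum]
  norm_num

lemma jacobi_five {p : ℕ} (hodd : Odd p) (h : p % 5 = 2) : J(5 | p) = -1 := by
  have h1 : J((5 : ℕ) | p) = J(p | 5) :=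
    jacobiSym.quadratic_reciprocity_one_mod_four (by norm_num) hodd
  have h2 : (p : ℤ) % (5 : ℕ) = 2 % (5 : ℕ) := by omega
  rw [show (5 : ℤ) = (5 : ℕ) by norm_num, h1, jacobiSym.mod_left' h2]
  norm_num

/-- Two primes, inert in `O`, modulo which `N` is a square and with product `-1` modulo `40N`. -/
lemma exists_inert_primes {N k e N0 : ℕ} (hN : N = 4 ^ k * (5 ^ e * N0)) (hN0 : Nat.Coprime N0 10)
    (h : Even e ∨ ¬ IsSquare N0) (b : ℕ) :
    ∃ p q : ℕ, p.Prime ∧ q.Prime ∧ b < p ∧ b < q ∧ p ≠ q ∧ 40 * N ∣ p * q + 1 ∧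
      J(5 | p) = -1 ∧ J(5 | q) = -1 ∧ J(N | p) = 1 ∧ J(N | q) = 1 := by
  have hodd0 : Odd N0 := by
    have := Nat.Coprime.coprime_dvd_right (by norm_num : 2 ∣ 10) hN0
    exact Nat.coprime_two_right.1 this
  have hN0' : N0 ≠ 0 := by rintro rfl; simp at hodd0
  have hNpos : 0 < N := by rw [hN]; positivity
  obtain ⟨u, huc, hu⟩ : ∃ u : ℕ, u.Coprime N0 ∧ J(u | N0) = (-1) ^ e := by
    by_cases he : Even e
    · exact ⟨1, Nat.coprime_one_left _, by rw [he.neg_one_pow]; simp⟩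
    · rw [(Nat.not_even_iff_odd.1 he).neg_one_pow]
      exact exists_jacobi_neg_one hodd0 (h.resolve_left he)
  have h40 : Nat.Coprime 40 N0 := by
    have : Nat.Coprime N0 (10 ^ 3) := hN0.pow_right 3
    exact (Nat.Coprime.coprime_dvd_right (by norm_num : 40 ∣ 10 ^ 3) this).symm
  -- `17` is `1` modulo `8` and `2` modulo `5`
  obtain ⟨v, hv1, hv2⟩ := Nat.chineseRemainder h40 17 u
  have hvc : v.Coprime (40 * N0) := by
    apply Nat.Coprime.mul_right
    · rw [Nat.coprime_iff_gcd_eq_one, hv1.gcd_eq]; norm_num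
    · rw [Nat.coprime_iff_gcd_eq_one, hv2.gcd_eq]; exact huc
  obtain ⟨p, hpb, hp, hpv⟩ := Nat.forall_exists_prime_gt_and_modEq (b + 40 * N)
    (q := 40 * N0) (by positivity) hvc
  have hp40 : p % 40 = 17 := by
    have := (hpv.of_dvd (Dvd.intro _ rfl)).trans hv1
    exact this
  have hpu : (p : ℤ) % N0 = u % N0 := by
    exact_mod_cast (hpv.of_dvd (Dvd.intro_left _ rfl)).trans hv2
  have hpodd : Odd p := by rw [Nat.odd_iff]; omega
  have h5p : J(5 | p) = -1 := jacobi_five hpodd (by omega)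
  have hNp : J(N | p) = 1 := by
    have h1 : J(N0 | p) = (-1) ^ e := by
      rw [jacobiSym.quadratic_reciprocity_one_mod_four' hodd0 (by omega), jacobiSym.mod_left' hpu,
        hu]
    rw [hN]; push_cast
    rw [jacobiSym.mul_left, jacobiSym.mul_left, jacobiSym.pow_left, jacobiSym.pow_left, h1, h5p,
      jacobiSym.at_four hpodd, one_pow, one_mul, ← mul_pow]
    norm_num
  have hpc : Nat.Coprime p (40 * N) := by
    rw [Nat.Prime.coprime_iff_not_dvd hp]
    intro h
    have := Nat.le_of_dvd (by positivity) h
    omega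
  have : NeZero (40 * N) := ⟨by positivity⟩
  obtain ⟨q, hqb, hq, hqp⟩ := Nat.forall_exists_prime_gt_and_eq_mod
    (q := 40 * N) (a := -((ZMod.unitOfCoprime p hpc)⁻¹ : (ZMod (40 * N))ˣ)) (by
      exact (Units.isUnit _).neg) (p + b)
  have hpq : 40 * N ∣ p * q + 1 := by
    rw [← ZMod.natCast_eq_zero_iff]
    push_cast
    rw [hqp, ← ZMod.coe_unitOfCoprime p hpc, mul_neg, Units.mul_inv]
    ring
  have hodd2 : Odd q := by
    rcases hq.eq_two_or_odd' with h | h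
    · have := hp.two_le; omega
    · exact h
  have h5q : J(5 | q) = -1 := by
    apply jacobi_five hodd2
    have h5 : 5 ∣ p * q + 1 := Dvd.dvd.trans ⟨8 * N, by ring⟩ hpq
    have hp5 : p % 5 = 2 := by omega
    have h6 : (p * q + 1) % 5 = 0 := Nat.mod_eq_zero_of_dvd h5
    rw [Nat.add_mod, Nat.mul_mod, hp5] at h6
    omega
  refine ⟨p, q, hp, hq, by omega, by omega, by omega, hpq, h5p, h5q, hNp, ?_⟩
  have h1 : J(N | p * q) = 1 := jacobi_of_neg_one hNpos (Dvd.dvd.trans ⟨10, by ring⟩ hpq)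
  rw [jacobiSym.mul_right' _ hp.ne_zero hq.ne_zero, hNp, one_mul] at h1
  exact h1

end

/-! ### Choice of the modulus `P` -/

section

open QuadraticAlgebra
open scoped NumberTheorySymbols

lemma TP.trace_pos {x : O} (h : TP x) : 0 < 2 * x.re + x.im := by
  have h1 := Real.goldenRatio_add_goldenConj
  have h2 := h.1
  have h3 := h.2
  rw [s1_apply] at h2
  rw [s2_apply] at h3
  have : (0 : ℝ) < 2 * x.re + x.im := by
    have : (2 * x.re + x.im : ℝ) = (x.re + x.im * Real.goldenRatio) +
      (x.re + x.im * Real.goldenConj) := by linear_combination (-(x.im : ℝ)) * h1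
    linarith
  exact_mod_cast this

lemma TP_eta : TP eta := by
  have h1 := Real.goldenRatio_lt_two
  have h2 := Real.goldenConj_neg
  constructor
  · rw [s1_apply]; simp [eta]; linarith
  · rw [s2_apply]; simp [eta]; linarith

/-- The case `N(D) = 5y²`. Here `Dη · R = (Dη + 5y)²` with `R = Tr(Dη) + 10y`, and `ℓ ≡ -s²` is
chosen so that `R` and `-η` are squares modulo `ℓ`. -/
lemma exists_prime_of_five_sq {D : O} (hD : TP D) {N y : ℕ} (hN : nm D = N) (hy : N = 5 * (y * y))
    (b : ℕ) : ∃ (l s t : ℕ) (ρ : O), l.Prime ∧ b < l ∧ Odd l ∧ 2 * N ∣ l + s * s ∧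
      ((2 * N : ℕ) : ℤ) ∣ s * t - 1 ∧ (l : O) ∣ ρ * ρ + D := by
  have hNpos : 0 < N := by have := hD.norm_pos; omega
  set α := D * eta with hα
  have htr := (hD.mul TP_eta).trace_pos
  obtain ⟨R, hR⟩ : ∃ R : ℕ, (R : ℤ) = 2 * α.re + α.im + 10 * y := by
    rw [← hα] at htr
    exact ⟨(2 * α.re + α.im + 10 * y).toNat, by omega⟩
  have hRpos : 0 < R := by rw [← hα] at htr; omega
  have hE : (α + 5 * y) * (α + 5 * y) = α * R := by
    have h1 := charpoly_eq α
    have h2 : nm α = 25 * (y * y) := by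
      rw [hα, map_mul, hN, hy]; simp [nm_def, eta]; ring
    have h3 : (R : O) = ((2 * α.re + α.im : ℤ) : O) + 10 * y := by
      have := congrArg (Int.cast : ℤ → O) hR
      push_cast at this ⊢; exact this
    rw [h2] at h1
    push_cast at h1 h3
    rw [h3]; linear_combination h1
  set K := 40 * N * R with hK
  have hKpos : 0 < K := by positivity
  obtain ⟨s, hsK, hs, hs5⟩ := Nat.forall_exists_prime_gt_and_modEq K (q := 5) (a := 2)
    (by norm_num) (by norm_num)
  have hsc : Nat.Coprime s K := by
    rw [Nat.Prime.coprime_iff_not_dvd hs]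
    intro h
    have := Nat.le_of_dvd hKpos h
    omega
  have : NeZero K := ⟨by positivity⟩
  set u := ZMod.unitOfCoprime s hsc with hu
  have hus : (s : ZMod K) = u := (ZMod.coe_unitOfCoprime s hsc).symm
  set t : ℕ := ((u⁻¹ : (ZMod K)ˣ) : ZMod K).val with ht
  have hut : (t : ZMod K) = (u⁻¹ : (ZMod K)ˣ) := ZMod.natCast_zmod_val _
  obtain ⟨l, hlK, hl, hlu⟩ := Nat.forall_exists_prime_gt_and_eq_mod (q := K)
    (a := -((u * u : (ZMod K)ˣ) : ZMod K)) ((Units.isUnit _).neg) (b + K)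
  have : Fact l.Prime := ⟨hl⟩
  have hls : K ∣ l + s * s := by
    rw [← ZMod.natCast_eq_zero_iff]; push_cast; rw [hlu, hus]; push_cast; ring
  have hst : (K : ℤ) ∣ s * t - 1 := by
    rw [← ZMod.intCast_zmod_eq_zero_iff_dvd]; push_cast; rw [hus, hut, Units.mul_inv, sub_self]
  have hltt : K ∣ l * (t * t) + 1 := by
    rw [← ZMod.natCast_eq_zero_iff]; push_cast; rw [hlu, hut]
    have h1 : (u : ZMod K) * (u⁻¹ : (ZMod K)ˣ) = 1 := Units.mul_inv u
    push_cast
    linear_combination (-((u : ZMod K) * (u⁻¹ : (ZMod K)ˣ)) - 1) * h1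
  have hl5 : l % 5 = 1 := by
    have h5 : (l + s * s) % 5 = 0 :=
      Nat.mod_eq_zero_of_dvd (Dvd.dvd.trans ⟨8 * N * R, by rw [hK]; ring⟩ hls)
    have hs' : s % 5 = 2 := hs5
    rw [Nat.add_mod, Nat.mul_mod, hs'] at h5
    omega
  have hlodd : Odd l := by
    rcases hl.eq_two_or_odd' with h | h
    · omega
    · exact h
  have hJ : J(R | l) = 1 := by
    have h1 : J(R | l * (t * t)) = 1 :=
      jacobi_of_neg_one hRpos (Dvd.dvd.trans ⟨10 * N, by rw [hK]; ring⟩ hltt)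
    have ht0 : t ≠ 0 := by
      rintro h0
      rw [h0] at hltt
      have := Nat.le_of_dvd (by norm_num) hltt
      have : 40 * 1 * 1 ≤ K := by rw [hK]; gcongr <;> omega
      omega
    rw [jacobiSym.mul_right' _ hl.ne_zero (mul_ne_zero ht0 ht0), jacobiSym.mul_right' _ ht0 ht0]
      at h1
    rcases jacobiSym.trichotomy R t with h | h | h <;> rw [h] at h1 <;> linarith
  obtain ⟨g, hg⟩ := ZMod.isSquare_of_jacobiSym_eq_one hJ
  have hRl : (R : ZMod l) ≠ 0 := by
    intro h
    have h1 := Nat.le_of_dvd hRpos ((ZMod.natCast_eq_zero_iff R l).1 h)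
    have h2 : R ≤ K := by rw [hK]; exact Nat.le_mul_of_pos_left _ (by positivity)
    omega
  have hg0 : g ≠ 0 := by rintro rfl; exact hRl (by simpa using hg)
  have h5l : (5 : ZMod l) ≠ 0 := by
    intro h
    have : l ∣ 5 := (ZMod.natCast_eq_zero_iff 5 l).1 (by exact_mod_cast h)
    have := (Nat.prime_dvd_prime_iff_eq hl (by norm_num)).1 this
    omega
  obtain ⟨f, hf⟩ := ZMod.intCast_surjective ((5 : ZMod l)⁻¹)
  obtain ⟨g', hg'⟩ := ZMod.intCast_surjective g⁻¹
  obtain ⟨g, rfl⟩ := ZMod.intCast_surjective g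
  obtain ⟨r, hr⟩ := neg_eta_isSquare hl5
  have d1 := int_dvd_of_zmod (p := l) (a := 5 * f) (b := 1) (by
    push_cast; rw [hf, mul_inv_cancel₀ h5l])
  have d2 := int_dvd_of_zmod (p := l) (a := g * g') (b := 1) (by
    push_cast; rw [hg', mul_inv_cancel₀ hg0])
  have d3 := int_dvd_of_zmod (p := l) (a := g * g) (b := R) (by
    push_cast; push_cast at hg; exact hg.symm)
  refine ⟨l, s, t, r * (α + 5 * y) * (star eta * f) * g', hl, by omega, hlodd,
    Dvd.dvd.trans ⟨20 * R, by rw [hK]; ring⟩ hls, Dvd.dvd.trans ?_ hst, ?_⟩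
  · exact Int.natCast_dvd_natCast.2 ⟨20 * R, by rw [hK]; ring⟩
  have he : eta * star eta = 5 := by ext <;> simp [eta]
  rw [← Ideal.Quotient.eq_zero_iff_dvd] at *
  generalize Ideal.Quotient.mk (Ideal.span {(l : O)}) = π at *
  have hE' := congrArg π hE
  have he' := congrArg π he
  rw [hα] at hE' ⊢
  simp only [map_mul, map_add, map_sub, map_natCast, map_intCast, map_ofNat, map_one, map_neg,
    Int.cast_mul, Int.cast_one, Int.cast_ofNat, Int.cast_natCast] at *
  generalize π D = D at *
  generalize π eta = η at *
  generalize π (star eta) = η' at *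
  generalize π r = r at *
  have hηi : η * (η' * f) = 1 := by linear_combination f * he' + d1
  generalize D * η + 5 * y = E at *
  generalize η' * f = i at *
  linear_combination (E * E * i * i * g' * g') * hr - (η * i * i * g' * g') * hE' +
    (η * η * i * i * D * g' * g') * d3 - (D * (g * g') ^ 2 * (η * i + 1)) * hηi -
    D * (g * g' + 1) * d2

lemma dvd_nm (x : O) : x ∣ ((nm x : ℤ) : O) :=
  ⟨star x, by ext <;> simp [nm_def] <;> ring⟩

/-- The prime `2` is inert. -/
lemma odd_nm {x : O} (h : ¬ 2 ∣ x) : Odd (nm x) := by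
  rw [two_dvd_iff] at h
  rw [nm_def]
  rcases Int.even_or_odd x.re with h1 | h1 <;> rcases Int.even_or_odd x.im with h2 | h2
  · exact absurd ⟨h1.two_dvd, h2.two_dvd⟩ h
  · exact ((h1.mul_right _).add (h1.mul_right _)).sub_odd (h2.mul h2)
  · exact ((h1.mul h1).add_even (h2.mul_left _)).sub_even (h2.mul_left _)
  · exact ((h1.mul h1).add_odd (h1.mul h2)).sub_odd (h2.mul h2)

/-- `N(D) = 4^k 5^e N₀` with `N₀` prime to `10`. -/
lemma norm_decomp {D : O} (hD : TP D) : ∃ N k e N0 : ℕ, nm D = N ∧ N = 4 ^ k * (5 ^ e * N0) ∧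
    Nat.Coprime N0 10 := by
  have hD2 : FiniteMultiplicity (2 : O) D := by
    apply FiniteMultiplicity.of_not_isUnit _ hD.ne_zero
    intro h
    have := norm_of_isUnit h
    revert this
    simp [nm_def]
  obtain ⟨D0, hD0, hn⟩ := hD2.exists_eq_pow_mul_and_not_dvd
  set k := multiplicity 2 D
  have hnm : nm D = 4 ^ k * nm D0 := by
    conv_lhs => rw [hD0]
    rw [map_mul, map_pow, show nm 2 = 4 by simp [nm_def]]
  have hpos : 0 < nm D0 := by
    have := hD.norm_pos
    rw [hnm] at this
    exact (mul_pos_iff_of_pos_left (by positivity)).1 this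
  obtain ⟨m, hm⟩ : ∃ m : ℕ, nm D0 = m := ⟨(nm D0).toNat, by omega⟩
  have hodd := odd_nm hn
  rw [hm] at hnm hodd hpos
  obtain ⟨e, N0, h5, hN0⟩ := Nat.exists_eq_pow_mul_and_not_dvd (by omega : m ≠ 0) 5 (by norm_num)
  refine ⟨4 ^ k * m, k, e, N0, by rw [hnm]; push_cast; rfl, by rw [hN0], ?_⟩
  rw [show 10 = 2 * 5 by norm_num]
  have h2 : ¬ 2 ∣ N0 := by
    intro h
    have h' : 2 ∣ m := by rw [hN0]; exact h.mul_left _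
    rw [Int.odd_iff] at hodd
    omega
  exact Nat.Coprime.mul_right
    ((Nat.Prime.coprime_iff_not_dvd Nat.prime_two).2 h2).symm
    ((Nat.Prime.coprime_iff_not_dvd Nat.prime_five).2 h5).symm

lemma isCoprime_of_prime_gt {p : ℕ} {x : O} (hp : p.Prime) (hx : x ≠ 0)
    (h : (nm x).natAbs < p) : IsCoprime (p : O) x := by
  have h0 : (nm x).natAbs ≠ 0 := Int.natAbs_ne_zero.2 (norm_ne_zero hx)
  have h1 : p.Coprime (nm x).natAbs := by
    rw [Nat.Prime.coprime_iff_not_dvd hp]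
    intro hd
    have := Nat.le_of_dvd (by omega) hd
    omega
  refine IsCoprime.of_isCoprime_of_dvd_right (isCoprime_cast h1) ((dvd_nm x).trans ?_)
  rcases Int.natAbs_eq (nm x) with h | h
  · rw [show (((nm x).natAbs : ℕ) : O) = (((nm x).natAbs : ℤ) : O) from
      (Int.cast_natCast _).symm, ← h]
  · rw [h]; push_cast; rw [neg_dvd]; simp

/-- The number `P` from which a unimodular quaternary form is built: it is `-s²` modulo `2D`, where
`s` is invertible, and `-D` is a square modulo `P`. -/
lemma exists_P {D c : O} (hD : TP D) (hc : c ≠ 0) : ∃ (P : ℕ) (s t ρ : O), 0 < P ∧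
    2 * D ∣ P + s * s ∧ 2 * D ∣ s * t - 1 ∧ IsCoprime (P : O) (D * c) ∧ (P : O) ∣ ρ * ρ + D := by
  obtain ⟨N, k, e, N0, hnm, hN, hN0⟩ := norm_decomp hD
  have hDN : (2 * D : O) ∣ (2 * N : ℕ) := by
    have := dvd_nm D
    rw [hnm] at this
    push_cast at this ⊢
    exact mul_dvd_mul_left _ this
  have hDc : D * c ≠ 0 := mul_ne_zero hD.ne_zero hc
  have hNpos : 0 < N := by have := hD.norm_pos; omega
  by_cases hcase : Even e ∨ ¬ IsSquare N0
  · obtain ⟨p, q, hp, hq, hpb, hqb, hpq, hd, h5p, h5q, hNp, hNq⟩ :=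
      exists_inert_primes hN hN0 hcase (N + (nm (D * c)).natAbs)
    have key : ∀ l : ℕ, l.Prime → N < l → J(5 | l) = -1 → J(N | l) = 1 →
        ∃ ρ : O, (l : O) ∣ ρ * ρ - -D := by
      intro l hl hNl h5 hNl'
      have : Fact l.Prime := ⟨hl⟩
      have hn : nm (-D) = N := by rw [← hnm]; simp [nm_def]
      apply isSquare_mod_inert
      · have := ZMod.nonsquare_iff_jacobiSym_eq_neg_one.1 h5
        push_cast at this; exact this
      · rw [hn]; push_cast
        intro h
        have := Nat.le_of_dvd hNpos ((ZMod.natCast_eq_zero_iff N l).1 h)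
        omega
      · rw [hn]; exact ZMod.isSquare_of_jacobiSym_eq_one hNl'
    obtain ⟨ρ1, h1⟩ := key p hp (by omega) h5p hNp
    obtain ⟨ρ2, h2⟩ := key q hq (by omega) h5q hNq
    obtain ⟨ρ, hρ⟩ := isSquare_crt ((Nat.coprime_primes hp hq).2 hpq) ⟨ρ1, h1⟩ ⟨ρ2, h2⟩
    refine ⟨p * q, 1, 1, ρ, Nat.mul_pos hp.pos hq.pos, ?_, by simp, ?_, by simpa using hρ⟩
    · have h3 : ((2 * N : ℕ) : O) ∣ ((p * q + 1 : ℕ) : O) :=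
        Nat.cast_dvd_cast (Dvd.dvd.trans ⟨20, by ring⟩ hd)
      have := hDN.trans h3
      push_cast at this ⊢
      simpa using this
    · push_cast
      exact (isCoprime_of_prime_gt hp hDc (by omega)).mul_left
        (isCoprime_of_prime_gt hq hDc (by omega))
  · push Not at hcase
    obtain ⟨he, w, hw⟩ := hcase
    obtain ⟨j, rfl⟩ := Nat.not_even_iff_odd.1 he
    obtain ⟨l, s, t, ρ, hl, hlb, -, h1, h2, h3⟩ := exists_prime_of_five_sq hD hnm
      (y := 2 ^ k * 5 ^ j * w) (by
        rw [hN, hw, show 4 = 2 * 2 by norm_num, mul_pow]; ring) ((nm (D * c)).natAbs)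
    refine ⟨l, s, t, ρ, hl.pos, ?_, ?_, isCoprime_of_prime_gt hl hDc hlb, h3⟩
    · have h4 : ((2 * N : ℕ) : O) ∣ ((l + s * s : ℕ) : O) := Nat.cast_dvd_cast h1
      have := hDN.trans h4
      push_cast at this ⊢
      exact this
    · have h4 : (((2 * N : ℕ) : ℤ) : O) ∣ ((s * t - 1 : ℤ) : O) := Int.cast_dvd_cast _ _ h2
      push_cast at h4 hDN ⊢
      exact hDN.trans h4

end

/-! ### The unimodular extension of a binary form -/

section

open QuadraticAlgebra Matrix

/-- The quaternary Gram matrix extending the binary form `[a, b; b, c]`. -/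
def ext4 (a b c s t g11 g12 g22 : O) : Matrix (Fin 4) (Fin 4) O :=
  !![a, b, s, 0; b, c, 0, t; s, 0, g11, g12; 0, t, g12, g22]

/-- With `F = [a, b; b, c]` the corner, `D = det F`, and `S = diag(s, t)` and `G` the other blocks of the
matrix, `D G = Q + S adj(F) S`, where `Q = [cP, r; r, q]` has determinant `D`. Hence the
determinant of the whole is `D · det(Q / D) = 1`. -/
lemma ext4_det {a b c s t g11 g12 g22 D P q r : O} (hD : a * c - b * b = D)
    (h11 : D * g11 = c * P + s * s * c) (h12 : D * g12 = r - s * t * b)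
    (h22 : D * g22 = q + t * t * a) (hQ : c * P * q - r * r = D) (hD0 : D ≠ 0) :
    (ext4 a b c s t g11 g12 g22).det = 1 := by
  apply mul_left_cancel₀ hD0
  have h : (ext4 a b c s t g11 g12 g22).det = (a * c - b * b) * (g11 * g22 - g12 * g12)
      - s * s * c * g22 - t * t * a * g11 - 2 * s * t * b * g12 + s * s * t * t := by
    simp [ext4, Matrix.det_succ_row_zero, Fin.sum_univ_succ, Fin.succAbove]
    ring
  rw [h]
  have e : (D * g11 - s * s * c) * (D * g22 - t * t * a) - (D * g12 + s * t * b) ^ 2 = D := by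
    rw [h11, h12, h22]; linear_combination hQ
  linear_combination e + (D * (g11 * g22 - g12 * g12) - s * s * t * t) * hD

lemma ext4_adj (a b c s t g11 g12 g22 : O) : (ext4 a b c s t g11 g12 g22).adjugate 0 0 =
    c * (g11 * g22 - g12 * g12) - t * t * g11 := by
  rw [adjugate_fin_succ_eq_det_submatrix]
  simp [ext4, Matrix.det_fin_three]
  ring

/-- Completing squares diagonalises `aDcP` times the form, with the diagonal entries `DcP`, `cP`, `a`,
`aD`. -/
lemma ext4_tpd {a b c s t g11 g12 g22 D P q r : O} (hD : a * c - b * b = D)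
    (h11 : D * g11 = c * P + s * s * c) (h12 : D * g12 = r - s * t * b)
    (h22 : D * g22 = q + t * t * a) (hQ : c * P * q - r * r = D) (ta : TP a) (tD : TP D)
    (tc : TP c) (tP : TP P) : TPD (ext4 a b c s t g11 g12 g22) := by
  have t1 : TP (a * D * (c * P)) := (ta.mul tD).mul (tc.mul tP)
  apply TPD.of_smul t1
  have hdiag : TPD (diagonal ![D * (c * P), c * P, a, a * D]) := by
    have hpos : ∀ i, TP ((![D * (c * P), c * P, a, a * D] : Fin 4 → O) i) := by
      intro i; fin_cases i
      · exact tD.mul (tc.mul tP)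
      · exact tc.mul tP
      · exact ta
      · exact ta.mul tD
    constructor
    · rw [diagonal_map (map_zero s1)]; exact PosDef.diagonal fun i => (hpos i).1
    · rw [diagonal_map (map_zero s2)]; exact PosDef.diagonal fun i => (hpos i).2
  have hW := hdiag.conj (B := !![a, b, s, 0; 0, D, -(b * s), a * t; 0, 0, c * P, r; 0, 0, 0, 1])
    (C := adjugate _) (d := a * D * (c * P)) t1.ne_zero (by
      rw [adjugate_mul]
      congr 1
      simp [Matrix.det_succ_row_zero, Fin.sum_univ_succ, Fin.succAbove]
      ring)
  convert hW using 1
  refine Matrix.ext fun i j => ?_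
  fin_cases i <;> fin_cases j <;>
    simp [ext4, Matrix.mul_apply, Fin.sum_univ_succ, Matrix.diagonal_apply,
      -mul_eq_mul_left_iff, -mul_eq_mul_right_iff, -mul_eq_zero, -zero_eq_mul] <;>
    first
    | ring1
    | linear_combination (c * P * D) * hD
    | linear_combination (a * (c * P)) * h11 + (c * P * s * s) * hD
    | linear_combination (a * (c * P)) * h12
    | linear_combination (a * (c * P)) * h22 + a * hQ

/-- A totally positive binary form with odd first and even last coefficient is a sum of four
squares: it is the top left corner of a unimodular quaternary form. -/
lemma four_squares_of_odd_even {a b c : O} (ha : TP a) (hD : TP (a * c - b * b)) (ha2 : ¬ 2 ∣ a)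
    (hc2 : 2 ∣ c) : ∃ x y : Fin 4 → O, x ⬝ᵥ x = a ∧ x ⬝ᵥ y = b ∧ y ⬝ᵥ y = c := by
  have hc : TP c := by
    apply ha.of_mul
    by_cases hb : b = 0
    · simpa [hb] using hD
    · have := hD.add (TP_sq hb)
      simpa using this
  generalize hDD : a * c - b * b = D at hD
  obtain ⟨P, s, t, ρ, hP0, ⟨k, hk⟩, ⟨j, hj⟩, hcop, hρ⟩ := exists_P hD hc.ne_zero
  have tP : TP (P : O) :=
    ⟨by rw [map_natCast]; exact_mod_cast hP0, by rw [map_natCast]; exact_mod_cast hP0⟩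
  have hs2 : ¬ (2 : O) ∣ s := by
    intro h
    have h1 : (2 : O) ∣ 1 := by
      have : (1 : O) = s * t - 2 * (D * j) := by linear_combination -hj
      rw [this]
      exact dvd_sub (h.mul_right _) (dvd_mul_right _ _)
    rw [two_dvd_iff] at h1
    simp at h1
  have hP2 : ¬ (2 : O) ∣ P := by
    intro h
    apply hs2
    apply two_dvd_of_sq
    have : s * s = 2 * (D * k) - P := by linear_combination hk
    rw [this]
    exact dvd_sub (dvd_mul_right _ _) h
  obtain ⟨u, v, huv⟩ := hcop
  obtain ⟨h, hh⟩ : ∃ h, h = v * (ρ - b) := ⟨_, rfl⟩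
  have hX : (P : O) ∣ a + 2 * b * D * h + D * D * c * h * h := by
    have h1 : (P : O) ∣ c * (a + 2 * b * D * h + D * D * c * h * h) := by
      obtain ⟨w, hw⟩ := hρ
      refine ⟨w + u * (ρ - b) * (u * P * (ρ - b) - 2 * ρ), ?_⟩
      have h2 : b + D * c * h = ρ - u * P * (ρ - b) := by
        rw [hh]; linear_combination (ρ - b) * huv
      calc c * (a + 2 * b * D * h + D * D * c * h * h) = D + (b + D * c * h) ^ 2 := by
            linear_combination hDD
        _ = _ := by rw [h2]; linear_combination hw
    exact (IsCoprime.of_mul_right_right ⟨u, v, huv⟩ : IsCoprime (P : O) c).dvd_of_dvd_mul_left h1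
  obtain ⟨q, hq⟩ := hX
  obtain ⟨Y, hY⟩ : ∃ Y, Y = b * h * 2 + D * c * h * h
      + 2 * a * (k * t * t - 2 * j - 2 * D * j * j) := ⟨_, rfl⟩
  have hPq : P * (q + t * t * a) = D * Y := by
    rw [hY]
    linear_combination -hq + (t * t * a) * hk - a * (s * t + 1 + 2 * D * j) * hj
  obtain ⟨g22, hg22⟩ : (P : O) ∣ Y :=
    (IsCoprime.of_mul_right_left ⟨u, v, huv⟩ : IsCoprime (P : O) D).dvd_of_dvd_mul_left
      ⟨_, hPq.symm⟩
  have h22 : D * g22 = q + t * t * a := by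
    apply mul_left_cancel₀ tP.ne_zero
    rw [hPq, hg22]; ring
  obtain ⟨c', hc'⟩ := hc2
  have h22e : 2 ∣ g22 := by
    apply two_dvd_of_odd_mul hP2
    rw [← hg22, hY]
    exact ⟨b * h + D * c' * h * h + a * (k * t * t - 2 * j - 2 * D * j * j), by rw [hc']; ring⟩
  have h11 : D * (c * (2 * k)) = c * P + s * s * c := by linear_combination -c * hk
  have h12 : D * (c * h - 2 * j * b) = (b + D * c * h) - s * t * b := by linear_combination b * hj
  have hQ : c * P * q - (b + D * c * h) * (b + D * c * h) = D := by
    linear_combination -c * hq + hDD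
  obtain ⟨C, hC⟩ := gram_of_unimodular (ext4_tpd hDD h11 h12 h22 hQ ha hD hc tP)
    (ext4_det hDD h11 h12 h22 hQ hD.ne_zero) ha2 (by
      intro i
      fin_cases i
      · exact ⟨c', hc'⟩
      · exact ⟨c * k, by simp [ext4]; ring⟩
      · exact h22e) (by
      obtain ⟨z, hz⟩ := h22e
      rw [ext4_adj, hz, hc']
      exact ⟨c' * (4 * c' * k * z - 2 * (c' * h - j * b) * (c' * h - j * b)) - t * t * c' * k, by
        ring⟩)
  refine ⟨fun i => C i 0, fun i => C i 1, ?_, ?_, ?_⟩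
  · exact (congrFun (congrFun hC 0) 0).symm
  · exact (congrFun (congrFun hC 0) 1).symm
  · exact (congrFun (congrFun hC 1) 1).symm

end

/-! ### Sums of four and five squares -/

section

open QuadraticAlgebra Matrix

/-- The binary form `aX² + 2bXY + cY²` over `O` is a sum of `n` squares of linear forms
`xᵢ X + yᵢ Y`. -/
def SumSq (n : ℕ) (a b c : O) : Prop :=
  ∃ x y : Fin n → O, x ⬝ᵥ x = a ∧ x ⬝ᵥ y = b ∧ y ⬝ᵥ y = c

lemma SumSq.swap {n : ℕ} {a b c : O} (h : SumSq n a b c) : SumSq n c b a := by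
  obtain ⟨x, y, h1, h2, h3⟩ := h
  exact ⟨y, x, h3, by rw [dotProduct_comm, h2], h1⟩

lemma SumSq.shear {n : ℕ} {a b c : O} (h : SumSq n a b c) (s : O) :
    SumSq n a (b + s * a) (c + 2 * s * b + s * s * a) := by
  obtain ⟨x, y, h1, h2, h3⟩ := h
  refine ⟨x, y + s • x, h1, ?_, ?_⟩
  · simp [h1, h2]
  · simp [h1, h2, h3, dotProduct_comm y x]; ring

lemma SumSq.smul {n : ℕ} {a b c : O} (h : SumSq n a b c) (s : O) :
    SumSq n (s * s * a) (s * s * b) (s * s * c) := by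
  obtain ⟨x, y, h1, h2, h3⟩ := h
  refine ⟨s • x, s • y, ?_, ?_, ?_⟩ <;> simp [h1, h2, h3] <;> ring

lemma SumSq.cons {n : ℕ} {a b c : O} (h : SumSq n a b c) (u v : O) :
    SumSq (n + 1) (a + u * u) (b + u * v) (c + v * v) := by
  obtain ⟨x, y, h1, h2, h3⟩ := h
  exact ⟨vecCons u x, vecCons v y, by simp [h1]; ring, by simp [h2]; ring, by simp [h3]; ring⟩

lemma dot_self_map {n : ℕ} (σ : O →+* ℝ) (x y : Fin n → O) :
    σ (x ⬝ᵥ y) = ∑ i, σ (x i) * σ (y i) := by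
  simp [dotProduct]

lemma TP_dot_self {n : ℕ} {x : Fin n → O} (h : x ⬝ᵥ x ≠ 0) : TP (x ⬝ᵥ x) := by
  have key : ∀ σ : O →+* ℝ, Function.Injective σ → 0 < σ (x ⬝ᵥ x) := by
    intro σ hσ
    refine lt_of_le_of_ne ?_ (fun h0 => h (hσ (by rw [← h0, map_zero])))
    rw [dot_self_map]
    exact Finset.sum_nonneg fun i _ => mul_self_nonneg _
  exact ⟨key s1 s1_injective, key s2 s2_injective⟩

lemma dot_self_eq_zero {n : ℕ} {x : Fin n → O} (h : x ⬝ᵥ x = 0) : x = 0 := by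
  have h1 := dot_self_map s1 x x
  rw [h, map_zero] at h1
  funext i
  have := (Finset.sum_eq_zero_iff_of_nonneg (fun i _ => mul_self_nonneg (s1 (x i)))).1 h1.symm i
    (Finset.mem_univ i)
  exact s1_injective (by rw [mul_self_eq_zero.1 this]; simp)

/-- Cauchy–Schwarz: a nonzero Gram determinant of two vectors is totally positive. -/
lemma TP_disc {n : ℕ} {x y : Fin n → O} (h : x ⬝ᵥ x * y ⬝ᵥ y - x ⬝ᵥ y * x ⬝ᵥ y ≠ 0) :
    TP (x ⬝ᵥ x * y ⬝ᵥ y - x ⬝ᵥ y * x ⬝ᵥ y) := by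
  have key : ∀ σ : O →+* ℝ, Function.Injective σ →
      0 < σ (x ⬝ᵥ x * y ⬝ᵥ y - x ⬝ᵥ y * x ⬝ᵥ y) := by
    intro σ hσ
    refine lt_of_le_of_ne ?_ (fun h0 => h (hσ (by rw [← h0, map_zero])))
    have := Finset.sum_mul_sq_le_sq_mul_sq Finset.univ (fun i => σ (x i)) (fun i => σ (y i))
    rw [map_sub, map_mul, map_mul, dot_self_map, dot_self_map, dot_self_map, sub_nonneg, ← sq]
    simpa [sq] using this
  exact ⟨key s1 s1_injective, key s2 s2_injective⟩

/-- Proportional vectors over the principal ideal domain `O` are multiples of one vector. -/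
lemma exists_common {n : ℕ} {x y : Fin n → O}
    (h : x ⬝ᵥ x * y ⬝ᵥ y - x ⬝ᵥ y * x ⬝ᵥ y = 0) :
    ∃ (p q : O) (g : Fin n → O), x = p • g ∧ y = q • g := by
  set a := x ⬝ᵥ x with ha
  set b := x ⬝ᵥ y with hb
  by_cases ha0 : a = 0
  · exact ⟨0, 1, y, by simpa using dot_self_eq_zero ha0, by simp⟩
  have hab : a • y - b • x = 0 := by
    apply dot_self_eq_zero
    simp [dotProduct_comm y x, ← ha, ← hb]
    linear_combination a * h
  obtain ⟨u, v, huv⟩ := IsBezout.gcd_eq_sum a b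
  obtain ⟨p, hp⟩ := IsBezout.gcd_dvd_left a b
  obtain ⟨q, hq⟩ := IsBezout.gcd_dvd_right a b
  generalize IsBezout.gcd a b = d at *
  have hd : d ≠ 0 := by rintro rfl; simp at hp; exact ha0 hp
  have h1 : u * p + v * q = 1 := by
    apply mul_left_cancel₀ hd
    linear_combination huv - u * hp - v * hq
  have h2 : ∀ i, p * y i = q * x i := by
    intro i
    apply mul_left_cancel₀ hd
    have := congrFun hab i
    simp at this
    linear_combination this - y i * hp + x i * hq
  refine ⟨p, q, fun i => u * x i + v * y i, ?_, ?_⟩ <;> funext i <;> simp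
  · linear_combination -x i * h1 - v * h2 i
  · linear_combination -y i * h1 + u * h2 i

/-- Modulo `2`, which is inert with residue field of four elements, `c` is `a` times a square. -/
lemma exists_sq_mul {a c : O} (ha : ¬ 2 ∣ a) (hc : ¬ 2 ∣ c) : ∃ s, 2 ∣ c + s * s * a := by
  obtain ⟨k, hk⟩ := odd_cube ha
  obtain ⟨l, hl⟩ := odd_cube hc
  refine ⟨c ^ 2 * a, c + c * (k + l + 2 * k * l), ?_⟩
  linear_combination (c * c ^ 3) * hk + c * (1 + 2 * k) * hl

/-- If the discriminant vanishes the form is an odd number `g ⬝ᵥ g` times the square of a linear form,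
and that number is a sum of four squares. Otherwise a shear `X ↦ X + sY` makes the last
coefficient even. -/
lemma sumSq_four_aux {n : ℕ} {x y : Fin n → O} (ha : ¬ 2 ∣ x ⬝ᵥ x) :
    SumSq 4 (x ⬝ᵥ x) (x ⬝ᵥ y) (y ⬝ᵥ y) := by
  have ha0 : TP (x ⬝ᵥ x) := TP_dot_self (fun h => ha (h ▸ dvd_zero _))
  by_cases hD : x ⬝ᵥ x * y ⬝ᵥ y - x ⬝ᵥ y * x ⬝ᵥ y = 0
  · obtain ⟨p, q, g, rfl, rfl⟩ := exists_common hD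
    have hg : ¬ 2 ∣ g ⬝ᵥ g := fun h => ha (by simpa using (h.mul_left p).mul_left p)
    have hg0 : TP (g ⬝ᵥ g) := TP_dot_self (fun h => hg (h ▸ dvd_zero _))
    obtain ⟨z, -, hz, -, -⟩ := four_squares_of_odd_even (a := g ⬝ᵥ g) (b := 0) (c := 2) hg0 (by
      have h2 : TP 2 := ⟨by rw [map_ofNat]; norm_num, by rw [map_ofNat]; norm_num⟩
      simpa using hg0.mul h2) hg dvd_rfl
    exact ⟨p • z, q • z, by simp [hz], by simp [hz], by simp [hz]⟩
  · have tD := TP_disc hD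
    generalize x ⬝ᵥ x = a at *
    generalize x ⬝ᵥ y = b at *
    generalize y ⬝ᵥ y = c at *
    by_cases hc : 2 ∣ c
    · exact four_squares_of_odd_even ha0 tD ha hc
    · obtain ⟨s, hs⟩ := exists_sq_mul ha hc
      have h := SumSq.shear (n := 4) (four_squares_of_odd_even (b := b + s * a)
        (c := c + 2 * s * b + s * s * a) ha0 (by
          convert tD using 1; ring) ha (by
          have : c + 2 * s * b + s * s * a = (c + s * s * a) + 2 * (s * b) := by ring
          rw [this]
          exact dvd_add hs (dvd_mul_right _ _))) (-s)
      convert h using 1 <;> ring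

/-- A sum of squares of linear forms with an odd diagonal coefficient is a sum of four squares. -/
lemma sumSq_four {n : ℕ} {x y : Fin n → O} (h : ¬ 2 ∣ x ⬝ᵥ x ∨ ¬ 2 ∣ y ⬝ᵥ y) :
    SumSq 4 (x ⬝ᵥ x) (x ⬝ᵥ y) (y ⬝ᵥ y) := by
  rcases h with h | h
  · exact sumSq_four_aux h
  · rw [dotProduct_comm x y]
    exact (sumSq_four_aux h).swap

lemma update_dot {n : ℕ} (x y : Fin n → O) (i : Fin n) :
    Function.update x i 0 ⬝ᵥ Function.update y i 0 + x i * y i = x ⬝ᵥ y := by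
  simp only [dotProduct]
  rw [← Finset.add_sum_erase _ _ (Finset.mem_univ i),
    ← Finset.add_sum_erase _ (fun i => x i * y i) (Finset.mem_univ i)]
  rw [Finset.sum_congr rfl (g := fun i => x i * y i)]
  · simp [add_comm]
  · intro j hj
    rw [Function.update_of_ne (Finset.ne_of_mem_erase hj),
      Function.update_of_ne (Finset.ne_of_mem_erase hj)]

/-- Every sum of squares of linear forms is a sum of five squares: halve it as long as all the
linear forms are even, and split off an odd linear form if the result is still even. -/
lemma sumSq_five : ∀ (m n : ℕ) (x y : Fin n → O),
    ∑ i, ((nm (x i)).natAbs + (nm (y i)).natAbs) ≤ m → SumSq 5 (x ⬝ᵥ x) (x ⬝ᵥ y) (y ⬝ᵥ y) := by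
  intro m
  induction m with
  | zero =>
    intro n x y h
    have h0 : ∀ i, x i = 0 ∧ y i = 0 := by
      intro i
      have := (Finset.sum_eq_zero_iff.1 (Nat.le_zero.1 h)) i (Finset.mem_univ i)
      exact ⟨norm_eq_zero (by omega), norm_eq_zero (by omega)⟩
    exact ⟨0, 0, by simp [dotProduct, h0], by simp [dotProduct, h0], by simp [dotProduct, h0]⟩
  | succ m ih =>
    intro n x y h
    by_cases hodd : ¬ 2 ∣ x ⬝ᵥ x ∨ ¬ 2 ∣ y ⬝ᵥ y
    · simpa using (sumSq_four hodd).cons 0 0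
    push Not at hodd
    by_cases hex : ∃ i, ¬ (2 ∣ x i ∧ 2 ∣ y i)
    · obtain ⟨i, hi⟩ := hex
      have h1 := update_dot x x i
      have h2 := update_dot x y i
      have h3 := update_dot y y i
      have := (sumSq_four (x := Function.update x i 0) (y := Function.update y i 0) (by
        by_contra hcon
        push Not at hcon
        rw [← h1, ← h3] at hodd
        exact hi ⟨two_dvd_of_sq ((dvd_add_right hcon.1).1 hodd.1),
          two_dvd_of_sq ((dvd_add_right hcon.2).1 hodd.2)⟩)).cons (x i) (y i)
      rwa [h1, h2, h3] at this
    · push Not at hex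
      choose u hu using fun i => (hex i).1
      choose v hv using fun i => (hex i).2
      have hnm : ∀ z : O, (nm (2 * z)).natAbs = 4 * (nm z).natAbs := by
        intro z
        rw [map_mul, Int.natAbs_mul, show nm 2 = 4 by simp [nm_def]]
        rfl
      have hx : x = (2 : O) • u := by funext i; rw [hu i]; rfl
      have hy : y = (2 : O) • v := by funext i; rw [hv i]; rfl
      have := (ih n u v (by
        simp only [hu, hv, hnm, ← mul_add, ← Finset.mul_sum] at h
        omega)).smul 2
      rw [hx, hy]
      simpa [mul_assoc] using this

end

/-! ### The example form and the passage to `ℤ[(1+√5)/2]` -/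

section

open QuadraticAlgebra Matrix

/-- The parity obstruction: `v² - v` is `0` or `1` modulo `2`, never `1 + φ`. -/
lemma no_rep {x z u w : O} (h1 : x + z = 1) (h2 : x * x + z * z + u * u + w * w = 16 + 2 * phi) :
    False := by
  have hev : 2 ∣ u + w - 1 := by
    apply two_dvd_of_sq
    refine ⟨8 + phi - x * x + x + u * w - u - w, ?_⟩
    obtain rfl : z = 1 - x := by linear_combination h1
    linear_combination h2
  obtain ⟨k, hk⟩ := hev
  obtain rfl : z = 1 - x := by linear_combination h1
  obtain rfl : w = 1 - u + 2 * k := by linear_combination hk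
  have h3 : (x * x - x) + (u * u - u) + 2 * (k * k + k - u * k) = 7 + phi := by
    have h4 : (2 : O) ≠ 0 := two_ne_zero
    apply mul_left_cancel₀ h4
    linear_combination h2
  have h5 := congrArg QuadraticAlgebra.im h3
  have h6 := Int.even_mul_pred_self x.im
  have h7 := Int.even_mul_pred_self u.im
  obtain ⟨i, hi⟩ := h6
  obtain ⟨j, hj⟩ := h7
  simp [phi] at h5
  have : 2 * (i + j + x.re * x.im + u.re * u.im +
      (k.re * k.im + k.im * k.re + k.im * k.im + k.im -
        (u.re * k.im + u.im * k.re + u.im * k.im))) = 1 := by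
    linear_combination h5 - hi - hj
  omega

/-- `Tr(α²)` is `0`, `2` or at least `3`, with value `2` only for `α = ±1`. -/
lemma trace_sq (α : O) : ∃ e : ℤ, 2 * (α * α).re + (α * α).im = e ∧
    ((e = 0 ∧ α = 0) ∨ (e = 2 ∧ α * α = 1) ∨ e = 3 ∨ 5 ≤ e) := by
  obtain ⟨x, y⟩ := α
  refine ⟨_, rfl, ?_⟩
  have he : 2 * ((⟨x, y⟩ : O) * ⟨x, y⟩).re + ((⟨x, y⟩ : O) * ⟨x, y⟩).im
      = 2 * (x * x) + 2 * (x * y) + 3 * (y * y) := by simp; ring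
  rw [he]
  have key : ∀ n : ℤ, 2 ≤ n ∨ n ≤ -2 → 4 ≤ n * n := by
    rintro n (h | h) <;> nlinarith
  obtain hy | hy | hy | hy : y = 0 ∨ y = 1 ∨ y = -1 ∨ (2 ≤ y ∨ y ≤ -2) := by omega
  · subst hy
    obtain hx | hx | hx | hx : x = 0 ∨ x = 1 ∨ x = -1 ∨ (2 ≤ x ∨ x ≤ -2) := by omega
    · subst hx; left; exact ⟨by norm_num, rfl⟩
    · subst hx; right; left; exact ⟨by norm_num, by ext <;> simp⟩
    · subst hx; right; left; exact ⟨by norm_num, by ext <;> simp⟩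
    · have := key x hx; right; right; right; linarith
  · subst hy
    have : 0 ≤ x * x + x := by
      rcases le_or_gt 0 x with h | h <;> nlinarith
    omega
  · subst hy
    have : 0 ≤ x * x - x := by
      rcases le_or_gt 0 x with h | h <;> nlinarith
    omega
  · have := key y hy
    right; right; right
    nlinarith [sq_nonneg (x + y), sq_nonneg x]

/-- As `∑ xᵢ² = 2` has trace `4`, exactly two of the `xᵢ` are `±1` and the others vanish; `no_rep`
excludes the remaining possibilities for the `yᵢ`. -/
lemma not_sumSq_four : ¬ SumSq 4 2 1 (16 + 2 * phi) := by
  rintro ⟨x, y, h1, h2, h3⟩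
  simp only [dotProduct, Fin.sum_univ_four] at h1 h2 h3
  obtain ⟨e0, ht0, h0⟩ := trace_sq (x 0)
  obtain ⟨e1, ht1, h1'⟩ := trace_sq (x 1)
  obtain ⟨e2, ht2, h2'⟩ := trace_sq (x 2)
  obtain ⟨e3, ht3, h3'⟩ := trace_sq (x 3)
  have hsum : e0 + e1 + e2 + e3 = 4 := by
    have hre := congrArg QuadraticAlgebra.re h1
    have him := congrArg QuadraticAlgebra.im h1
    rw [re_add, re_add, re_add] at hre
    rw [im_add, im_add, im_add] at him
    have h4 : (2 : O).re = 2 := rfl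
    have h5 : (2 : O).im = 0 := rfl
    omega
  have sq : ∀ i, x i * x i = 1 → y i * y i = (x i * y i) * (x i * y i) := by
    intro i hi; linear_combination -(y i * y i) * hi
  rcases h0 with ⟨a0, b0⟩ | ⟨a0, b0⟩ | a0 | a0 <;> rcases h1' with ⟨a1, b1⟩ | ⟨a1, b1⟩ | a1 | a1 <;>
    rcases h2' with ⟨a2, b2⟩ | ⟨a2, b2⟩ | a2 | a2 <;>
    rcases h3' with ⟨a3, b3⟩ | ⟨a3, b3⟩ | a3 | a3 <;> first
    | omega
    | (rw [b0, b1] at h2; rw [sq 2 b2, sq 3 b3] at h3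
       exact no_rep (x := x 2 * y 2) (z := x 3 * y 3) (u := y 0) (w := y 1)
         (by linear_combination h2) (by linear_combination h3))
    | (rw [b0, b2] at h2; rw [sq 1 b1, sq 3 b3] at h3
       exact no_rep (x := x 1 * y 1) (z := x 3 * y 3) (u := y 0) (w := y 2)
         (by linear_combination h2) (by linear_combination h3))
    | (rw [b0, b3] at h2; rw [sq 1 b1, sq 2 b2] at h3
       exact no_rep (x := x 1 * y 1) (z := x 2 * y 2) (u := y 0) (w := y 3)
         (by linear_combination h2) (by linear_combination h3))
    | (rw [b1, b2] at h2; rw [sq 0 b0, sq 3 b3] at h3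
       exact no_rep (x := x 0 * y 0) (z := x 3 * y 3) (u := y 1) (w := y 2)
         (by linear_combination h2) (by linear_combination h3))
    | (rw [b1, b3] at h2; rw [sq 0 b0, sq 2 b2] at h3
       exact no_rep (x := x 0 * y 0) (z := x 2 * y 2) (u := y 1) (w := y 3)
         (by linear_combination h2) (by linear_combination h3))
    | (rw [b2, b3] at h2; rw [sq 0 b0, sq 1 b1] at h3
       exact no_rep (x := x 0 * y 0) (z := x 1 * y 1) (u := y 2) (w := y 3)
         (by linear_combination h2) (by linear_combination h3))

lemma sumSq_example : SumSq 6 2 1 (16 + 2 * phi) := by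
  refine ⟨![1, 1, 0, 0, 0, 0], ![1, 0, phi, phi, 3, 2], ?_, ?_, ?_⟩
  all_goals simp [dotProduct, Fin.sum_univ_succ]
  · norm_num
  · have : phi * phi = phi + 1 := by ext <;> simp [phi]
    linear_combination 2 * this

lemma s1_phi : s1 phi = (1 + Real.sqrt 5) / 2 := by
  rw [s1_apply]; simp [phi, Real.goldenRatio]

lemma s1_mem (x : O) : s1 x ∈ Zphi := by
  have hφ : Real.goldenRatio ∈ Zphi := goldenRatio'.2
  rw [s1_apply]
  exact add_mem (intCast_mem _ _) (mul_mem (intCast_mem _ _) hφ)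

/-- The isomorphism from the coordinate model `O` to `ℤ[(1+√5)/2] ⊆ ℝ`. -/
noncomputable def toZphi : O ≃+* Zphi :=
  RingEquiv.ofBijective (s1.codRestrict Zphi s1_mem) (by
    constructor
    · intro x y h
      exact s1_injective (congrArg Subtype.val h)
    · rintro ⟨z, hz⟩
      have hle : Zphi ≤ (s1.toIntAlgHom).range :=
        Algebra.adjoin_le (by rintro _ rfl; exact ⟨phi, s1_phi⟩)
      obtain ⟨x, hx⟩ := hle hz
      exact ⟨x, Subtype.ext hx⟩)

lemma toZphi_phi : toZphi phi = goldenRatio' := Subtype.ext s1_phi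

/-- A sum of squares of linear forms in terms of its Gram coefficients. -/
lemma sum_sq_eq {n : ℕ} (x y : Fin n → O) (a : Fin n → Fin 2 → Zphi)
    (hx : ∀ i, a i 0 = toZphi (x i)) (hy : ∀ i, a i 1 = toZphi (y i)) :
    (∑ i, (∑ j, C (a i j) * X j) ^ 2 : MvPolynomial (Fin 2) Zphi) =
      C (toZphi (x ⬝ᵥ x)) * X 0 ^ 2 + C (2 * toZphi (x ⬝ᵥ y)) * X 0 * X 1 +
        C (toZphi (y ⬝ᵥ y)) * X 1 ^ 2 := by
  simp only [dotProduct, map_sum, map_mul, Finset.mul_sum, Finset.sum_mul, Fin.sum_univ_two, hx, hy,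
    ← Finset.sum_add_distrib, map_ofNat]
  exact Finset.sum_congr rfl fun i _ => by ring

end

end GoldenForms

/-- `g_{O_F}(2) = 5` for `O_F = ℤ[(1+√5)/2]`: (i) every binary
quadratic form over `O_F` that is a finite sum of squares of linear forms is a sum of
`5` squares of linear forms; (ii) the form `2X² + 2XY + (2·(1+√5)/2 + 16)Y²` is a finite
sum of squares of linear forms but not a sum of `4` squares of linear forms. -/
theorem g_invariant_two_sqrt5_eq_five :
    (∀ (n : ℕ) (a : Fin n → Fin 2 → Zphi), ∃ c : Fin 5 → Fin 2 → Zphi,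
      (∑ i, (∑ j, C (a i j) * X j) ^ 2 : MvPolynomial (Fin 2) Zphi) =
        ∑ i, (∑ j, C (c i j) * X j) ^ 2) ∧
    (∃ (n : ℕ) (a : Fin n → Fin 2 → Zphi),
      exampleForm = ∑ i, (∑ j, C (a i j) * X j) ^ 2) ∧
    ¬ ∃ c : Fin 4 → Fin 2 → Zphi,
      exampleForm = ∑ i, (∑ j, C (c i j) * X j) ^ 2 := by
  refine ⟨fun n a => ?_, ?_, ?_⟩
  · obtain ⟨x, y, h1, h2, h3⟩ := GoldenForms.sumSq_five _ n
      (fun i => GoldenForms.toZphi.symm (a i 0)) (fun i => GoldenForms.toZphi.symm (a i 1)) le_rfl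
    refine ⟨fun i => ![GoldenForms.toZphi (x i), GoldenForms.toZphi (y i)], ?_⟩
    rw [GoldenForms.sum_sq_eq x y _ (fun _ => rfl) (fun _ => rfl), h1, h2, h3,
      ← GoldenForms.sum_sq_eq _ _ a (by simp) (by simp)]
  · obtain ⟨x, y, h1, h2, h3⟩ := GoldenForms.sumSq_example
    refine ⟨6, fun i => ![GoldenForms.toZphi (x i), GoldenForms.toZphi (y i)], ?_⟩
    rw [GoldenForms.sum_sq_eq x y _ (fun _ => rfl) (fun _ => rfl), h1, h2, h3, exampleForm]
    simp only [map_add, map_mul, map_ofNat, map_one, GoldenForms.toZphi_phi]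
    ring
  · rintro ⟨c, hc⟩
    set x := fun i => GoldenForms.toZphi.symm (c i 0) with hx
    set y := fun i => GoldenForms.toZphi.symm (c i 1) with hy
    rw [GoldenForms.sum_sq_eq x y c (by simp [hx]) (by simp [hy]), exampleForm] at hc
    -- read off the coefficients by evaluating at `(1, 0)`, `(0, 1)` and `(1, 1)`
    have e1 := congrArg (eval ![1, 0]) hc
    have e2 := congrArg (eval ![0, 1]) hc
    have e3 := congrArg (eval ![1, 1]) hc
    simp at e1 e2 e3
    rw [← e1, ← e2] at e3
    have e4 : GoldenForms.toZphi (dotProduct x y) = 1 := by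
      have : (2 : Zphi) ≠ 0 := two_ne_zero
      apply mul_left_cancel₀ this
      linear_combination -e3
    refine GoldenForms.not_sumSq_four ⟨x, y, ?_, ?_, ?_⟩ <;> apply GoldenForms.toZphi.injective
    · rw [← e1, map_ofNat]
    · rw [e4, map_one]
    · rw [← e2, map_add, map_mul, map_ofNat, map_ofNat, GoldenForms.toZphi_phi]; ring
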